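/- arXiv:1502.03415 — 6 statements merged into one kernel-verified Lean document; each statement's English description precedes it below -/
import Mathlib

section
/- Let V: ℝ^n → ℝ be C² with V(0) = 0, ∇V(0) = 0 and P := (1/2)·H(V)(0), let a: ℝ^n → ℝ^n be differentiable at 0 with a(0) = 0 and A := Da(0), let b: ℝ^n → ℝ^{n×p} be continuous with B := b(0), and let R ∈ ℝ^{p×p} be symmetric positive definite. Define q(χ) := −∇V(χ)·a(χ) + (1/4)·(∇V(χ)ᵀb(χ)) R⁻¹ (∇V(χ)ᵀb(χ))ᵀ. Then q(χ) = χᵀQχ + o(|χ|²) as χ → 0, where Q := −(AᵀP + PA) + PBR⁻¹BᵀP; in particular if q is twice differentiable at 0 then (1/2)·H(q)(0) = Q. -/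
open Matrix Filter Topology Asymptotics

noncomputable section

/-- `V` is proper: `V χ → ∞` as `‖χ‖ → ∞`. -/
def IsProper {E : Type*} [NormedAddCommGroup E] (V : E → ℝ) : Prop :=
  Filter.Tendsto V (Bornology.cobounded E) Filter.atTop

/-- `V` is positive definite: `V 0 = 0` and `V x > 0` for `x ≠ 0`. -/
def IsPosDefFn {E : Type*} [NormedAddCommGroup E] (V : E → ℝ) : Prop :=
  V 0 = 0 ∧ ∀ x : E, x ≠ 0 → 0 < V x

/-- The Hessian matrix of `V` at `x`. -/
def hessianAt {n : ℕ} (V : (Fin n → ℝ) → ℝ) (x : Fin n → ℝ) :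
    Matrix (Fin n) (Fin n) ℝ :=
  Matrix.of fun i j => iteratedFDeriv ℝ 2 V x ![Pi.single i 1, Pi.single j 1]

/-- A real square matrix is Hurwitz if all of its (complex) eigenvalues have
negative real part. -/
def Hurwitz {ι : Type*} [Fintype ι] [DecidableEq ι] (M : Matrix ι ι ℝ) : Prop :=
  ∀ μ : ℂ, μ ∈ spectrum ℂ (M.map (algebraMap ℝ ℂ)) → μ.re < 0

/-- Global asymptotic stability of the origin for `χ' = F (χ)`:
(i) Lyapunov stability of the origin, and (ii) for every initial condition there is a
solution defined on all of `[0, ∞)` converging to the origin (for a locally Lipschitz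
vector field, by uniqueness of solutions, this is equivalent to requiring every maximal
solution to be defined on `[0,∞)` and to converge to the origin). -/
def IsGAS {E : Type*} [NormedAddCommGroup E] [NormedSpace ℝ E] (F : E → E) : Prop :=
  (∀ ε > 0, ∃ δ > 0, ∀ (χ : ℝ → E) (T : ℝ),
      (∀ t ∈ Set.Ico (0:ℝ) T, HasDerivAt χ (F (χ t)) t) →
      ‖χ 0‖ ≤ δ → ∀ t ∈ Set.Ico (0:ℝ) T, ‖χ t‖ ≤ ε) ∧
  (∀ x₀ : E, ∃ χ : ℝ → E, χ 0 = x₀ ∧ (∀ t : ℝ, 0 ≤ t → HasDerivAt χ (F (χ t)) t) ∧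
      Filter.Tendsto χ Filter.atTop (nhds 0))

/-!
Write `P = ½ H(V)(0)`. Since `∇V` vanishes at the origin, `∇V(χ) = 2Pχ + o(|χ|)`; together with
`a(χ) = Aχ + o(|χ|)` and `b(χ) = B + o(1)`, bilinearity gives `∇V(χ)·a(χ) = 2χᵀPAχ + o(|χ|²)` and
`∇V(χ)ᵀb(χ) = 2χᵀPB + o(|χ|)`, hence the expansion of `q`. If `q` is twice differentiable at the
origin, this expansion must be its Taylor polynomial: a quadratic form that is `o(|χ|²)` vanishes.
-/

section SecondOrder

variable {E F : Type*} [NormedAddCommGroup E] [NormedSpace ℝ E]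
  [NormedAddCommGroup F] [NormedSpace ℝ F] {f : E → F} {x₀ : E}

/-- Twice differentiability of `f` at the single point `x`, the regularity under which the second
derivative at `x` is symmetric. Differentiability near `x` is required because `fderiv ℝ f` takes
the junk value `0` at points where `f` is not differentiable. -/
def TwiceDifferentiableAt (f : E → F) (x : E) : Prop :=
  (∀ᶠ y in 𝓝 x, DifferentiableAt ℝ f y) ∧ DifferentiableAt ℝ (fderiv ℝ f) x

namespace TwiceDifferentiableAt

theorem of_contDiffAt (hf : ContDiffAt ℝ 2 f x₀) : TwiceDifferentiableAt f x₀ :=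
  ⟨(hf.eventually (by simp)).mono fun _ hy => hy.differentiableAt two_ne_zero,
    (hf.fderiv_right (m := 1) (by norm_num)).differentiableAt one_ne_zero⟩

theorem isSymmSndFDerivAt (hf : TwiceDifferentiableAt f x₀) : IsSymmSndFDerivAt ℝ f x₀ :=
  second_derivative_symmetric_of_eventually
    (hf.1.mono fun _ hy => hy.hasFDerivAt) hf.2.hasFDerivAt

theorem isLittleO_taylor (hf : TwiceDifferentiableAt f x₀) :
    (fun x => f x - f x₀ - fderiv ℝ f x₀ (x - x₀)
      - (1 / 2 : ℝ) • fderiv ℝ (fderiv ℝ f) x₀ (x - x₀) (x - x₀))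
      =o[𝓝 x₀] fun x => ‖x - x₀‖ ^ 2 := by
  set L := fderiv ℝ (fderiv ℝ f) x₀
  obtain ⟨ε, hε, hdiff⟩ := Metric.eventually_nhds_iff_ball.1 hf.1
  have hx₀ : x₀ ∈ Metric.ball x₀ ε := Metric.mem_ball_self hε
  let r : E → F := fun x =>
    f x - fderiv ℝ f x₀ (x - x₀) - (1 / 2 : ℝ) • L (x - x₀) (x - x₀)
  let r' : E → E →L[ℝ] F := fun x => fderiv ℝ f x - fderiv ℝ f x₀ - L (x - x₀)
  have hr : ∀ x ∈ Metric.ball x₀ ε, HasFDerivWithinAt r (r' x) (Metric.ball x₀ ε) x := by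
    intro x hx
    have hsub : HasFDerivAt (fun y : E => y - x₀) (ContinuousLinearMap.id ℝ E) x :=
      (hasFDerivAt_id x).sub_const x₀
    have hquad := (L.hasFDerivAt.comp x hsub).clm_apply hsub
    refine ((((hdiff x hx).hasFDerivAt.sub ((fderiv ℝ f x₀).hasFDerivAt.comp x hsub)).sub
      (hquad.const_smul (1 / 2 : ℝ))).congr_fderiv ?_).hasFDerivWithinAt
    ext v
    have hsymm : L v (x - x₀) = L (x - x₀) v := hf.isSymmSndFDerivAt v (x - x₀)
    simp only [r', one_div, _root_.sub_apply, _root_.smul_apply,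
      _root_.add_apply, ContinuousLinearMap.comp_apply, ContinuousLinearMap.id_apply,
      ContinuousLinearMap.flip_apply, Function.comp_apply, hsymm]
    module
  have hr' : r' =o[𝓝[Metric.ball x₀ ε] x₀] fun x => ‖x - x₀‖ ^ 1 := by
    simpa only [pow_one] using (hf.2.hasFDerivAt.isLittleO.norm_right).mono nhdsWithin_le_nhds
  have key := (convex_ball x₀ ε).isLittleO_pow_succ hx₀ hr hr'
  rw [Metric.isOpen_ball.nhdsWithin_eq hx₀] at key
  refine key.congr_left fun x => ?_
  simp only [r, sub_self, map_zero, smul_zero, sub_zero]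
  abel

end TwiceDifferentiableAt

theorem eq_zero_of_homogeneous_of_isLittleO {k : ℕ} {h : E → F}
    (hh : ∀ (t : ℝ) x, h (t • x) = t ^ k • h x) (ho : h =o[𝓝 0] fun x => ‖x‖ ^ k) (x : E) :
    h x = 0 := by
  have ht : Tendsto (fun t : ℝ => t • x) (𝓝[≠] 0) (𝓝 0) := by
    have hcont : ContinuousAt (fun t : ℝ => t • x) 0 := by fun_prop
    simpa only [ContinuousAt, zero_smul] using hcont.tendsto.mono_left nhdsWithin_le_nhds
  have hscaled : (fun t : ℝ => t ^ k • h x) =o[𝓝[≠] 0] fun t : ℝ => t ^ k • ‖x‖ ^ k := by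
    refine ((ho.comp_tendsto ht).congr_left fun t => hh t x).trans_isBigO ?_
    refine IsBigO.of_bound 1 (Eventually.of_forall fun t => ?_)
    simp [norm_smul, mul_pow]
  have hconst : (fun _ : ℝ => h x) =o[𝓝[≠] (0 : ℝ)] fun _ : ℝ => ‖x‖ ^ k := by
    refine ((isBigO_refl (fun t : ℝ => (t ^ k)⁻¹) (𝓝[≠] 0)).smul_isLittleO hscaled).congr' ?_ ?_ <;>
    · filter_upwards [self_mem_nhdsWithin] with t ht
      exact inv_smul_smul₀ (pow_ne_zero k ht) _
  exact isLittleO_const_const_iff.1 hconst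

theorem TwiceDifferentiableAt.fderiv_fderiv_apply_self_of_isLittleO
    (hf : TwiceDifferentiableAt f x₀) (Φ : E →L[ℝ] E →L[ℝ] F)
    (h : (fun x => f x - Φ (x - x₀) (x - x₀)) =o[𝓝 x₀] fun x => ‖x - x₀‖ ^ 2) (v : E) :
    fderiv ℝ (fderiv ℝ f) x₀ v v = (2 : ℝ) • Φ v v := by
  have hΦ : (fun x => Φ (x - x₀) (x - x₀)) =O[𝓝 x₀] fun x => ‖x - x₀‖ ^ 2 :=
    IsBigO.of_bound ‖Φ‖ (Eventually.of_forall fun x => by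
      simpa [sq, mul_assoc] using Φ.le_opNorm₂ (x - x₀) (x - x₀))
  have hfO : f =O[𝓝 x₀] fun x => ‖x - x₀‖ ^ 2 :=
    (h.isBigO.add hΦ).congr_left fun x => sub_add_cancel _ _
  have hf0 : f x₀ = 0 := hfO.eq_zero_of_norm_pow two_ne_zero
  have hf1 : fderiv ℝ f x₀ = 0 := (hfO.hasFDerivAt one_lt_two).fderiv
  have hdiff := hf.isLittleO_taylor.sub h
  rw [← map_add_left_nhds_zero, isLittleO_map] at hdiff
  simp only [Function.comp_def, add_sub_cancel_left] at hdiff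
  have hzero := eq_zero_of_homogeneous_of_isLittleO (k := 2)
    (h := fun x => Φ x x - (1 / 2 : ℝ) • fderiv ℝ (fderiv ℝ f) x₀ x x) (fun t x => by
      simp only [map_smul, _root_.smul_apply]; module)
    (hdiff.congr_left fun x => by simp [hf0, hf1]) v
  rw [sub_eq_zero.1 hzero, smul_smul]
  norm_num

end SecondOrder

theorem isLittleO_bilinear_sub {α E F G : Type*}
    [NormedAddCommGroup E] [NormedSpace ℝ E] [NormedAddCommGroup F] [NormedSpace ℝ F]
    [NormedAddCommGroup G] [NormedSpace ℝ G] (Φ : E →L[ℝ] F →L[ℝ] G) {l : Filter α}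
    {u u₀ : α → E} {w w₀ : α → F} {g₁ g₂ : α → ℝ}
    (hu : (fun x => u x - u₀ x) =o[l] g₁) (hu₀ : u₀ =O[l] g₁)
    (hw : (fun x => w x - w₀ x) =o[l] g₂) (hw₀ : w₀ =O[l] g₂) :
    (fun x => Φ (u x) (w x) - Φ (u₀ x) (w₀ x)) =o[l] fun x => g₁ x * g₂ x := by
  have hwO : w =O[l] g₂ := (hw.isBigO.add hw₀).congr_left fun x => sub_add_cancel _ _
  have hfst : (fun x => Φ (u x - u₀ x) (w x)) =o[l] fun x => g₁ x * g₂ x :=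
    Φ.isBoundedBilinearMap.isBigO_comp.trans_isLittleO (hu.norm_left.mul_isBigO hwO.norm_left)
  have hsnd : (fun x => Φ (u₀ x) (w x - w₀ x)) =o[l] fun x => g₁ x * g₂ x :=
    Φ.isBoundedBilinearMap.isBigO_comp.trans_isLittleO (hu₀.norm_left.mul_isLittleO hw.norm_left)
  refine (hfst.add hsnd).congr_left fun x => ?_
  simp only [map_sub, _root_.sub_apply, sub_add_sub_cancel]

section FirstOrder

variable {E F : Type*} [NormedAddCommGroup E] [NormedSpace ℝ E]
  [NormedAddCommGroup F] [NormedSpace ℝ F] {V : E → F}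

theorem isLittleO_fderiv_apply_sub (hV : DifferentiableAt ℝ (fderiv ℝ V) 0)
    (hgrad0 : fderiv ℝ V 0 = 0) {w w₀ : E → E} {g : E → ℝ}
    (hw : (fun χ => w χ - w₀ χ) =o[𝓝 0] g) (hw₀ : w₀ =O[𝓝 0] g) :
    (fun χ => fderiv ℝ V χ (w χ) - fderiv ℝ (fderiv ℝ V) 0 χ (w₀ χ))
      =o[𝓝 0] fun χ => ‖χ‖ * g χ := by
  have hgrad : (fun χ => fderiv ℝ V χ - fderiv ℝ (fderiv ℝ V) 0 χ) =o[𝓝 0] fun χ => ‖χ‖ := by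
    simpa only [hgrad0, sub_zero] using hV.hasFDerivAt.isLittleO.norm_right
  exact isLittleO_bilinear_sub (ContinuousLinearMap.id ℝ (E →L[ℝ] F)) hgrad
    (ContinuousLinearMap.isBigO_id _ _).norm_right hw hw₀

theorem isLittleO_fderiv_apply_sub_of_differentiableAt (hV : DifferentiableAt ℝ (fderiv ℝ V) 0)
    (hgrad0 : fderiv ℝ V 0 = 0) {a : E → E} (ha : DifferentiableAt ℝ a 0) (ha0 : a 0 = 0) :
    (fun χ => fderiv ℝ V χ (a χ) - fderiv ℝ (fderiv ℝ V) 0 χ (fderiv ℝ a 0 χ))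
      =o[𝓝 0] fun χ => ‖χ‖ ^ 2 := by
  have hlin : (fun χ => a χ - fderiv ℝ a 0 χ) =o[𝓝 0] fun χ => ‖χ‖ := by
    simpa only [ha0, sub_zero] using ha.hasFDerivAt.isLittleO.norm_right
  simpa only [sq] using isLittleO_fderiv_apply_sub hV hgrad0 hlin
    (ContinuousLinearMap.isBigO_id _ _).norm_right

theorem isLittleO_fderiv_apply_sub_of_continuousAt (hV : DifferentiableAt ℝ (fderiv ℝ V) 0)
    (hgrad0 : fderiv ℝ V 0 = 0) {w : E → E} (hw : ContinuousAt w 0) :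
    (fun χ => fderiv ℝ V χ (w χ) - fderiv ℝ (fderiv ℝ V) 0 χ (w 0)) =o[𝓝 0] fun χ => ‖χ‖ := by
  have hlim : (fun χ => w χ - w 0) =o[𝓝 0] fun _ => (1 : ℝ) :=
    (isLittleO_one_iff ℝ).2 (tendsto_sub_nhds_zero_iff.2 hw)
  simpa only [mul_one] using isLittleO_fderiv_apply_sub hV hgrad0 hlim
    (isBigO_const_const _ one_ne_zero _)

end FirstOrder

section Hessian

variable {n : ℕ} {f : (Fin n → ℝ) → ℝ} {x₀ : Fin n → ℝ}

theorem dotProduct_hessianAt_mulVec (f : (Fin n → ℝ) → ℝ) (x₀ v w : Fin n → ℝ) :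
    v ⬝ᵥ hessianAt f x₀ *ᵥ w = fderiv ℝ (fderiv ℝ f) x₀ v w := by
  have hmatrix : hessianAt f x₀ =
      LinearMap.toMatrix₂' ℝ (fderiv ℝ (fderiv ℝ f) x₀).toLinearMap₁₂ := by
    ext i j
    simp [hessianAt, iteratedFDeriv_two_apply, LinearMap.toMatrix₂'_apply]
  rw [hmatrix, ← toLinearMap₂'_apply', toLinearMap₂'_toMatrix']
  rfl

theorem isSymm_hessianAt (hf : TwiceDifferentiableAt f x₀) : (hessianAt f x₀).IsSymm := by
  refine IsSymm.ext fun i j => ?_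
  simpa [hessianAt, iteratedFDeriv_two_apply] using hf.isSymmSndFDerivAt _ _

theorem half_hessianAt_eq_of_isLittleO (hf : TwiceDifferentiableAt f x₀)
    {Q : Matrix (Fin n) (Fin n) ℝ} (hQ : Q.IsSymm)
    (h : (fun x => f x - (x - x₀) ⬝ᵥ Q *ᵥ (x - x₀)) =o[𝓝 x₀] fun x => ‖x - x₀‖ ^ 2) :
    (1 / 2 : ℝ) • hessianAt f x₀ = Q := by
  refine toBilin'.injective (LinearMap.BilinForm.ext_of_isSymm
    (isSymm_toBilin'_iff_isSymm.2 ((isSymm_hessianAt hf).smul _))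
    (isSymm_toBilin'_iff_isSymm.2 hQ) fun v => ?_)
  have hdiag := hf.fderiv_fderiv_apply_self_of_isLittleO
    (toLinearMap₂' ℝ Q).toContinuousBilinearMap
    (by simpa only [LinearMap.toContinuousBilinearMap_apply, toLinearMap₂'_apply'] using h) v
  rw [LinearMap.toContinuousBilinearMap_apply, toLinearMap₂'_apply'] at hdiag
  rw [toBilin'_apply', toBilin'_apply', smul_mulVec, dotProduct_smul,
    dotProduct_hessianAt_mulVec, hdiag, smul_smul]
  norm_num

end Hessian

section Riccati

variable {ι κ 𝕜 : Type*} [Fintype ι] [Fintype κ] [CommRing 𝕜]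

/-- The matrix `Q = -(AᵀP + PA) + P B S Bᵀ P`, i.e. the state weight for which `P` solves the
algebraic Riccati equation `AᵀP + PA - P B S Bᵀ P + Q = 0`. The matrix `S` plays the role of
`R⁻¹`, so that nothing has to be inverted. -/
def riccatiMatrix (A : Matrix ι ι 𝕜) (B : Matrix ι κ 𝕜) (S : Matrix κ κ 𝕜) (P : Matrix ι ι 𝕜) :
    Matrix ι ι 𝕜 :=
  -(Aᵀ * P + P * A) + P * B * S * Bᵀ * P

variable {A : Matrix ι ι 𝕜} {B : Matrix ι κ 𝕜} {S : Matrix κ κ 𝕜} {P : Matrix ι ι 𝕜}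

theorem isSymm_riccatiMatrix (hS : S.IsSymm) (hP : P.IsSymm) : (riccatiMatrix A B S P).IsSymm := by
  simp only [IsSymm, riccatiMatrix, transpose_add, transpose_neg, transpose_mul,
    transpose_transpose, hS.eq, hP.eq, Matrix.mul_assoc, add_comm]

theorem dotProduct_riccatiMatrix_mulVec (hP : P.IsSymm) (x : ι → 𝕜) :
    x ⬝ᵥ riccatiMatrix A B S P *ᵥ x =
      -(2 * (x ⬝ᵥ P *ᵥ A *ᵥ x)) + (x ᵥ* (P * B)) ⬝ᵥ S *ᵥ (x ᵥ* (P * B)) := by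
  have hdrift : x ⬝ᵥ (Aᵀ * P) *ᵥ x = x ⬝ᵥ (P * A) *ᵥ x := by
    rw [← dotProduct_transpose_mulVec (P * A), transpose_mul, hP.eq]
  have hinput : x ⬝ᵥ (P * B * S * Bᵀ * P) *ᵥ x =
      (x ᵥ* (P * B)) ⬝ᵥ S *ᵥ (x ᵥ* (P * B)) := by
    rw [← dotProduct_mulVec, ← mulVec_transpose, transpose_mul, hP.eq, mulVec_mulVec,
      mulVec_mulVec]
    simp only [Matrix.mul_assoc]
  rw [riccatiMatrix, add_mulVec, neg_mulVec, add_mulVec, dotProduct_add, dotProduct_neg,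
    dotProduct_add, hdrift, hinput, mulVec_mulVec, two_mul]

end Riccati

section StateCost

variable {ι κ : Type*} [Fintype ι]

/-- The row vector `L_b V(χ) = ∇V(χ)ᵀ b(χ)`: its entries are the derivatives of `V` along the
columns of `b`. -/
def lieDerivRow (V : (ι → ℝ) → ℝ) (b : (ι → ℝ) → Matrix ι κ ℝ) (χ : ι → ℝ) : κ → ℝ :=
  fun i => fderiv ℝ V χ ((b χ).col i)

variable [Fintype κ]

/-- The inverse-optimality state cost `q = -L_a V + ¼ L_b V S (L_b V)ᵀ`, where `S` plays the role
of the inverse `R⁻¹` of the input weight. -/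
def stateCost (V : (ι → ℝ) → ℝ) (a : (ι → ℝ) → ι → ℝ) (b : (ι → ℝ) → Matrix ι κ ℝ)
    (S : Matrix κ κ ℝ) (χ : ι → ℝ) : ℝ :=
  -(fderiv ℝ V χ (a χ)) + (1 / 4) * (lieDerivRow V b χ ⬝ᵥ S *ᵥ lieDerivRow V b χ)

section Linearization

variable {V : (ι → ℝ) → ℝ} {b : (ι → ℝ) → Matrix ι κ ℝ}

theorem isLittleO_lieDerivRow_sub (hV : DifferentiableAt ℝ (fderiv ℝ V) 0)
    (hgrad0 : fderiv ℝ V 0 = 0) (hb : ContinuousAt b 0) :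
    (fun χ => lieDerivRow V b χ - fun i => fderiv ℝ (fderiv ℝ V) 0 χ ((b 0).col i))
      =o[𝓝 0] fun χ => ‖χ‖ := by
  refine isLittleO_pi.2 fun i => isLittleO_fderiv_apply_sub_of_continuousAt hV hgrad0 ?_
  exact continuousAt_pi.2 fun k => (continuous_id.matrix_elem k i).continuousAt.comp hb

theorem isLittleO_quadratic_lieDerivRow_sub (hV : DifferentiableAt ℝ (fderiv ℝ V) 0)
    (hgrad0 : fderiv ℝ V 0 = 0) (hb : ContinuousAt b 0) (S : Matrix κ κ ℝ) :
    (fun χ => lieDerivRow V b χ ⬝ᵥ S *ᵥ lieDerivRow V b χ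
        - (fun i => fderiv ℝ (fderiv ℝ V) 0 χ ((b 0).col i)) ⬝ᵥ
          S *ᵥ fun i => fderiv ℝ (fderiv ℝ V) 0 χ ((b 0).col i))
      =o[𝓝 0] fun χ => ‖χ‖ ^ 2 := by
  classical
  have hrow := isLittleO_lieDerivRow_sub hV hgrad0 hb
  have hlin : (fun χ i => fderiv ℝ (fderiv ℝ V) 0 χ ((b 0).col i)) =O[𝓝 0] fun χ => ‖χ‖ :=
    isBigO_pi.2 fun i =>
      (((fderiv ℝ (fderiv ℝ V) 0).flip ((b 0).col i)).isBigO_id _).norm_right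
  simpa only [LinearMap.toContinuousBilinearMap_apply, toLinearMap₂'_apply', sq] using
    isLittleO_bilinear_sub (toLinearMap₂' ℝ S).toContinuousBilinearMap hrow hlin hrow hlin

end Linearization

variable {n : ℕ} {V : (Fin n → ℝ) → ℝ} {a : (Fin n → ℝ) → Fin n → ℝ}
  {b : (Fin n → ℝ) → Matrix (Fin n) κ ℝ} {A : Matrix (Fin n) (Fin n) ℝ} {S : Matrix κ κ ℝ}

theorem isLittleO_stateCost_sub_riccatiMatrix (hV : TwiceDifferentiableAt V 0)
    (hgrad0 : fderiv ℝ V 0 = 0) (ha : DifferentiableAt ℝ a 0) (ha0 : a 0 = 0)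
    (hA : ∀ v, fderiv ℝ a 0 v = A *ᵥ v) (hb : ContinuousAt b 0) :
    (fun χ => stateCost V a b S χ
        - χ ⬝ᵥ riccatiMatrix A (b 0) S ((1 / 2 : ℝ) • hessianAt V 0) *ᵥ χ)
      =o[𝓝 0] fun χ => ‖χ‖ ^ 2 := by
  set P := (1 / 2 : ℝ) • hessianAt V 0 with hP
  have hderiv : ∀ χ v, fderiv ℝ (fderiv ℝ V) 0 χ v = 2 * (χ ⬝ᵥ P *ᵥ v) := fun χ v => by
    rw [hP, smul_mulVec, dotProduct_smul, dotProduct_hessianAt_mulVec, smul_eq_mul]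
    ring
  have hrow : ∀ χ, (fun i => fderiv ℝ (fderiv ℝ V) 0 χ ((b 0).col i)) =
      (2 : ℝ) • (χ ᵥ* (P * b 0)) := fun χ => by
    ext i
    rw [hderiv, dotProduct_mulVec, ← vecMul_vecMul]
    rfl
  have hdrift := isLittleO_fderiv_apply_sub_of_differentiableAt hV.2 hgrad0 ha ha0
  have hinput := (isLittleO_quadratic_lieDerivRow_sub hV.2 hgrad0 hb S).const_mul_left (1 / 4)
  refine (hinput.sub hdrift).congr_left fun χ => ?_
  rw [dotProduct_riccatiMatrix_mulVec ((isSymm_hessianAt hV).smul _), stateCost, hrow, hA, hderiv,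
    mulVec_smul, dotProduct_smul, smul_dotProduct, smul_eq_mul, smul_eq_mul]
  ring

theorem stmt11_general (hV : TwiceDifferentiableAt V 0)
    (hgrad0 : fderiv ℝ V 0 = 0) (ha : DifferentiableAt ℝ a 0) (ha0 : a 0 = 0)
    (hA : ∀ v, fderiv ℝ a 0 v = A *ᵥ v) (hb : ContinuousAt b 0) (hS : S.IsSymm) :
    (fun χ => stateCost V a b S χ
        - χ ⬝ᵥ riccatiMatrix A (b 0) S ((1 / 2 : ℝ) • hessianAt V 0) *ᵥ χ)
      =o[𝓝 0] (fun χ => ‖χ‖ ^ 2) ∧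
    (TwiceDifferentiableAt (stateCost V a b S) 0 →
      (1 / 2 : ℝ) • hessianAt (stateCost V a b S) 0 =
        riccatiMatrix A (b 0) S ((1 / 2 : ℝ) • hessianAt V 0)) := by
  have hexpansion := isLittleO_stateCost_sub_riccatiMatrix (S := S) hV hgrad0 ha ha0 hA hb
  refine ⟨hexpansion, fun hq => half_hessianAt_eq_of_isLittleO hq
    (isSymm_riccatiMatrix hS ((isSymm_hessianAt hV).smul _)) ?_⟩
  simpa only [sub_zero] using hexpansion

end StateCost

/-- Quadratic approximation at the origin of the inverse-optimality
state cost `q := −L_aV + ¼ L_bV R⁻¹ (L_bV)ᵀ`: with `P := ½ H(V)(0)` and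
`Q := −(AᵀP + PA) + PBR⁻¹BᵀP`, one has `q(χ) = χᵀQχ + o(‖χ‖²)`; in particular, if `q`
is twice differentiable at `0`, then `½ H(q)(0) = Q`. -/
theorem stmt11 {n p : ℕ}
    (V : (Fin n → ℝ) → ℝ)
    (hV : ContDiff ℝ 2 V) (hV0 : V 0 = 0) (hgrad0 : fderiv ℝ V 0 = 0)
    (a : (Fin n → ℝ) → (Fin n → ℝ)) (b : (Fin n → ℝ) → Fin n → Fin p → ℝ)
    (A : Matrix (Fin n) (Fin n) ℝ) (B : Matrix (Fin n) (Fin p) ℝ)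
    (R : Matrix (Fin p) (Fin p) ℝ)
    (ha_diff : DifferentiableAt ℝ a 0) (ha0 : a 0 = 0)
    (hA : ∀ v, fderiv ℝ a 0 v = A.mulVec v)
    (hb : Continuous b) (hB : B = Matrix.of (b 0))
    (hR : R.PosDef)
    (q : (Fin n → ℝ) → ℝ)
    (hq : q = fun χ => -(fderiv ℝ V χ (a χ))
      + (1/4) * ((fun i => fderiv ℝ V χ (fun k => b χ k i)) ⬝ᵥ
          R⁻¹.mulVec (fun i => fderiv ℝ V χ (fun k => b χ k i))))
    (Q : Matrix (Fin n) (Fin n) ℝ)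
    (hQ : Q = -(Aᵀ * (((1:ℝ)/2) • hessianAt V 0) + (((1:ℝ)/2) • hessianAt V 0) * A)
        + (((1:ℝ)/2) • hessianAt V 0) * B * R⁻¹ * Bᵀ * (((1:ℝ)/2) • hessianAt V 0)) :
    (fun χ => q χ - χ ⬝ᵥ Q.mulVec χ) =o[nhds (0 : Fin n → ℝ)] (fun χ => ‖χ‖ ^ 2) ∧
    (ContDiffAt ℝ 2 q 0 → ((1:ℝ)/2) • hessianAt q 0 = Q) := by
  subst hq hQ hB
  exact (stmt11_general (b := fun χ => of (b χ)) (.of_contDiffAt hV.contDiffAt) hgrad0 ha_diff ha0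
    hA hb.continuousAt (isHermitian_iff_isSymm.1 hR.isHermitian.inv)).imp_right (· ∘ .of_contDiffAt)
end
end

section
/- Let V: ℝ^n → ℝ≥0 be a C¹ proper positive definite function, let a: ℝ^n → ℝ^n and b: ℝ^n → ℝ^{n×p} be continuous, and let R ∈ ℝ^{p×p} be symmetric positive definite. Assume (i) for every χ ≠ 0, ∇V(χ)ᵀb(χ) = 0 implies ∇V(χ)·a(χ) < 0, and (ii) there exists r₀ > 0 such that −∇V(χ)·a(χ) + (1/4)·(∇V(χ)ᵀb(χ)) R⁻¹ (∇V(χ)ᵀb(χ))ᵀ > 0 for all χ with 0 < V(χ) ≤ r₀. Then there exists a continuous function μ: ℝ≥0 → [1, ∞) with μ(s) = 1 for s ≤ r₀/2 such that for every χ ≠ 0, −∇V(χ)·a(χ) + (μ(V(χ))/4)·(∇V(χ)ᵀb(χ)) R⁻¹ (∇V(χ)ᵀb(χ))ᵀ > 0. -/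
open Matrix Filter Topology Asymptotics

noncomputable section

/-!
Put `f = -L_aV` and `q = ¼ L_bV R⁻¹ (L_bV)ᵀ ≥ 0`, so that `f + m q` increases with `m` and the
Artstein condition says that `f > 0` wherever `q = 0`, away from the origin. There `f + m q` is
positive for large `m`, hence by monotonicity and compactness one constant gain suffices on each
shell `r₀ ≤ V ≤ c`. The gains admissible at a level `s` form an interval, so a partition of unity
glues the constant gains into a continuous one. Below `r₀` no condition has to be imposed on the
gain: there `f + q > 0`, and a gain `≥ 1` only helps.
-/

lemma eventually_atTop_pos_add_mul {y z : ℝ} (hz : 0 ≤ z) (hy : z = 0 → 0 < y) :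
    ∀ᶠ m in atTop, 0 < y + m * z := by
  rcases hz.eq_or_lt with hz | hz
  · exact .of_forall fun m ↦ by simpa [← hz] using hy hz.symm
  · exact (tendsto_atTop_add_const_left _ y (tendsto_id.atTop_mul_const hz)).eventually_gt_atTop 0

section Gain

variable {X : Type*} {v f q : X → ℝ} {δ r : ℝ}

/-- The gains admissible at the level `s`: those which are at least `1`, equal `1` when `s ≤ δ`,
and make `f + m q` positive on the level set `v = s` when `r ≤ s`. The gain function is a
continuous selection of these convex sets. -/
def admissibleGains (v f q : X → ℝ) (δ r s : ℝ) : Set ℝ :=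
  {m | 1 ≤ m ∧ (s ≤ δ → m = 1) ∧ (r ≤ s → ∀ x, v x = s → 0 < f x + m * q x)}

lemma convex_admissibleGains (hq₀ : ∀ x, 0 ≤ q x) (s : ℝ) :
    Convex ℝ (admissibleGains v f q δ r s) := by
  refine Set.OrdConnected.convex ⟨fun m hm m' hm' k hk ↦ ⟨hm.1.trans hk.1, fun hs ↦ ?_, ?_⟩⟩
  · exact le_antisymm (hk.2.trans_eq (hm'.2.1 hs)) (hm.1.trans hk.1)
  · intro hs x hx
    have hkx : m * q x ≤ k * q x := mul_le_mul_of_nonneg_right hk.1 (hq₀ x)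
    linarith [hm.2.2 hs x hx]

variable [TopologicalSpace X]

lemma eventually_atTop_forall_mem_pos_add_mul {K : Set X} (hK : IsCompact K)
    (hf : Continuous f) (hq : Continuous q) (hq₀ : ∀ x, 0 ≤ q x)
    (hfq : ∀ x ∈ K, q x = 0 → 0 < f x) :
    ∀ᶠ m in atTop, ∀ x ∈ K, 0 < f x + m * q x := by
  let U (m : ℝ) : Set X := {x | 0 < f x + m * q x}
  have hUopen (m : ℝ) : IsOpen (U m) := isOpen_lt continuous_const (by fun_prop)
  have hUmono : Monotone U := fun _ _ h x hx ↦
    hx.trans_le (add_le_add_right (mul_le_mul_of_nonneg_right h (hq₀ _)) _)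
  have hcover : K ⊆ ⋃ m, U m := fun x hx ↦
    Set.mem_iUnion.2 (eventually_atTop_pos_add_mul (hq₀ x) (hfq x hx)).exists
  obtain ⟨m₀, hm₀⟩ := hK.elim_directed_cover U hUopen hcover hUmono.directed_le
  filter_upwards [eventually_ge_atTop m₀] with m hm x hx
  exact hUmono hm (hm₀ hx)

lemma exists_eventually_mem_admissibleGains (hf : Continuous f) (hq : Continuous q)
    (hq₀ : ∀ x, 0 ≤ q x) (hfq : ∀ x, r ≤ v x → q x = 0 → 0 < f x)
    (hK : ∀ c, IsCompact (v ⁻¹' Set.Icc r c)) (hδ : δ < r) (s : ℝ) :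
    ∃ m, ∀ᶠ y in 𝓝 s, m ∈ admissibleGains v f q δ r y := by
  rcases lt_or_ge s r with hs | hs
  · refine ⟨1, ?_⟩
    filter_upwards [Iio_mem_nhds hs] with y hy
    exact ⟨le_rfl, fun _ ↦ rfl, fun hry ↦ absurd hry (not_le.2 hy)⟩
  · obtain ⟨m, hm, hm₁⟩ := ((eventually_atTop_forall_mem_pos_add_mul (hK (s + 1)) hf hq hq₀
      fun x hx ↦ hfq x hx.1).and (eventually_ge_atTop 1)).exists
    refine ⟨m, ?_⟩
    filter_upwards [Ioo_mem_nhds (hδ.trans_le hs) (lt_add_one s)] with y hy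
    refine ⟨hm₁, fun hyδ ↦ absurd hyδ (not_le.2 hy.1), ?_⟩
    rintro hry x rfl
    exact hm x ⟨hry, hy.2.le⟩

theorem exists_continuous_gain (hf : Continuous f) (hq : Continuous q)
    (hq₀ : ∀ x, 0 ≤ q x) (hfq : ∀ x, r ≤ v x → q x = 0 → 0 < f x)
    (hK : ∀ c, IsCompact (v ⁻¹' Set.Icc r c)) (hδ : δ < r) :
    ∃ μ : ℝ → ℝ, Continuous μ ∧ (∀ s, 1 ≤ μ s) ∧ (∀ s ≤ δ, μ s = 1) ∧
      ∀ x, r ≤ v x → 0 < f x + μ (v x) * q x := by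
  obtain ⟨μ, hμ⟩ := exists_continuous_forall_mem_convex_of_local_const
    (convex_admissibleGains hq₀) (exists_eventually_mem_admissibleGains hf hq hq₀ hfq hK hδ)
  exact ⟨μ, μ.continuous, fun s ↦ (hμ s).1, fun s ↦ (hμ s).2.1,
    fun x hx ↦ (hμ (v x)).2.2 hx x rfl⟩

end Gain

lemma IsProper.isCompact_preimage {E : Type*} [NormedAddCommGroup E] [ProperSpace E] {V : E → ℝ}
    (hV : IsProper V) (hVc : Continuous V) {s : Set ℝ} (hs : IsClosed s) (hs' : BddAbove s) :
    IsCompact (V ⁻¹' s) := by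
  obtain ⟨c, hc⟩ := hs'
  refine Metric.isCompact_of_isClosed_isBounded (hs.preimage hVc) (Bornology.isBounded_def.2 ?_)
  filter_upwards [hV.eventually_gt_atTop c] with x hx hxs
  exact (hc hxs).not_gt hx

theorem stmt12_general {E ι : Type*} [NormedAddCommGroup E] [NormedSpace ℝ E] [ProperSpace E]
    [Fintype ι] [DecidableEq ι]
    (V : E → ℝ) (hV : ContDiff ℝ 1 V) (hVproper : IsProper V) (hVpos : IsPosDefFn V)
    (a : E → E) (b : E → ι → E) (ha : Continuous a) (hb : Continuous b)
    (R : Matrix ι ι ℝ) (hR : R.PosDef)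
    (hArtstein : ∀ χ, χ ≠ 0 → (∀ i, fderiv ℝ V χ (b χ i) = 0) → fderiv ℝ V χ (a χ) < 0)
    (δ r₀ : ℝ) (hr₀ : 0 < r₀) (hδ : δ < r₀)
    (hloc : ∀ χ, 0 < V χ → V χ ≤ r₀ →
      0 < -(fderiv ℝ V χ (a χ)) + (1 / 4) * ((fun i ↦ fderiv ℝ V χ (b χ i)) ⬝ᵥ
        R⁻¹.mulVec (fun i ↦ fderiv ℝ V χ (b χ i)))) :
    ∃ μ : ℝ → ℝ, Continuous μ ∧ (∀ s, 1 ≤ μ s) ∧ (∀ s ≤ δ, μ s = 1) ∧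
      ∀ χ, χ ≠ 0 →
        0 < -(fderiv ℝ V χ (a χ)) + (μ (V χ) / 4) * ((fun i ↦ fderiv ℝ V χ (b χ i)) ⬝ᵥ
          R⁻¹.mulVec (fun i ↦ fderiv ℝ V χ (b χ i))) := by
  let f (χ : E) : ℝ := -(fderiv ℝ V χ (a χ))
  let w (χ : E) (i : ι) : ℝ := fderiv ℝ V χ (b χ i)
  let q (χ : E) : ℝ := 1 / 4 * (w χ ⬝ᵥ R⁻¹.mulVec (w χ))
  have hV' : Continuous (fderiv ℝ V) := hV.continuous_fderiv one_ne_zero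
  have hf : Continuous f := (hV'.clm_apply ha).neg
  have hw : Continuous w := continuous_pi fun i ↦ hV'.clm_apply (by fun_prop)
  have hq : Continuous q :=
    continuous_const.mul (hw.dotProduct (continuous_const.matrix_mulVec hw))
  have hq₀ (χ : E) : 0 ≤ q χ :=
    mul_nonneg (by norm_num) (hR.inv.posSemidef.dotProduct_mulVec_nonneg (w χ))
  have hfq (χ : E) (hχ : r₀ ≤ V χ) (hqχ : q χ = 0) : 0 < f χ := by
    have hχ₀ : χ ≠ 0 := by
      rintro rfl
      exact (hr₀.trans_le hχ).ne' hVpos.1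
    have hwχ : w χ = 0 := by
      by_contra hne
      have hpos : 0 < w χ ⬝ᵥ R⁻¹.mulVec (w χ) := hR.inv.dotProduct_mulVec_pos hne
      exact (mul_pos (by norm_num) hpos).ne' hqχ
    exact neg_pos.2 (hArtstein χ hχ₀ (congrFun hwχ))
  obtain ⟨μ, hμc, hμ₁, hμδ, hμ⟩ := exists_continuous_gain hf hq hq₀ hfq
    (fun _ ↦ hVproper.isCompact_preimage hV.continuous isClosed_Icc bddAbove_Icc) hδ
  refine ⟨μ, hμc, hμ₁, hμδ, fun χ hχ ↦ ?_⟩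
  suffices 0 < f χ + μ (V χ) * q χ by
    convert this using 2
    ring
  rcases le_total r₀ (V χ) with hr | hr
  · exact hμ χ hr
  · exact (hloc χ (hVpos.2 χ hχ) hr).trans_le
      (add_le_add_right (le_mul_of_one_le_left (hq₀ χ) (hμ₁ _)) _)

/-- Under the Artstein condition away from the origin and positivity
of `−L_aV + ¼ L_bV R⁻¹ (L_bV)ᵀ` on a small sublevel set, there is a continuous gain
`μ : ℝ≥0 → [1,∞)`, equal to `1` below `r₀/2`, making
`−L_aV + (μ(V)/4) L_bV R⁻¹ (L_bV)ᵀ` positive away from the origin. -/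
theorem stmt12 {n p : ℕ}
    (V : (Fin n → ℝ) → ℝ)
    (hV : ContDiff ℝ 1 V) (hVnonneg : ∀ χ, 0 ≤ V χ)
    (hVproper : IsProper V) (hVpos : IsPosDefFn V)
    (a : (Fin n → ℝ) → (Fin n → ℝ)) (b : (Fin n → ℝ) → Fin n → Fin p → ℝ)
    (ha : Continuous a) (hb : Continuous b)
    (R : Matrix (Fin p) (Fin p) ℝ) (hR : R.PosDef)
    (hArtstein : ∀ χ : Fin n → ℝ, χ ≠ 0 →
      (∀ i, fderiv ℝ V χ (fun k => b χ k i) = 0) → fderiv ℝ V χ (a χ) < 0)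
    (r₀ : ℝ) (hr₀ : 0 < r₀)
    (hloc : ∀ χ : Fin n → ℝ, 0 < V χ → V χ ≤ r₀ →
      0 < -(fderiv ℝ V χ (a χ))
        + (1/4) * ((fun i => fderiv ℝ V χ (fun k => b χ k i)) ⬝ᵥ
            R⁻¹.mulVec (fun i => fderiv ℝ V χ (fun k => b χ k i)))) :
    ∃ μ : NNReal → ℝ, Continuous μ ∧ (∀ s, 1 ≤ μ s) ∧
      (∀ s : NNReal, (s:ℝ) ≤ r₀ / 2 → μ s = 1) ∧
      ∀ χ : Fin n → ℝ, χ ≠ 0 →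
        0 < -(fderiv ℝ V χ (a χ))
          + (μ (V χ).toNNReal / 4) * ((fun i => fderiv ℝ V χ (fun k => b χ k i)) ⬝ᵥ
              R⁻¹.mulVec (fun i => fderiv ℝ V χ (fun k => b χ k i))) := by
  obtain ⟨μ, hμc, hμ₁, hμδ, hμ⟩ := stmt12_general V hV hVproper hVpos a (fun χ i k ↦ b χ k i)
    ha (by fun_prop) R hR hArtstein (r₀ / 2) r₀ hr₀ (half_lt_self hr₀) hloc
  exact ⟨fun s ↦ μ s, by fun_prop, fun s ↦ hμ₁ s, fun s ↦ hμδ s,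
    fun χ hχ ↦ by simpa only [Real.coe_toNNReal _ (hVnonneg χ)] using hμ χ hχ⟩
end
end

section
/- Let n = n_y + 1 and let P ∈ ℝ^{n×n} be a positive definite matrix written in block form P = [[P₁₁, P₁₂],[P₁₂ᵀ, P₂₂]] with P₁₁ ∈ ℝ^{n_y×n_y}, P₁₂ ∈ ℝ^{n_y×1} and P₂₂ ∈ ℝ (a positive scalar). Let A = [[H₁, H₂],[F₁, F₂]] with H₁ ∈ ℝ^{n_y×n_y}, H₂ ∈ ℝ^{n_y×1}, F₁ ∈ ℝ^{1×n_y}, F₂ ∈ ℝ, let G ∈ ℝ with B := [0; G] ∈ ℝ^{n×1}, and let K ∈ ℝ^{1×n} be such that (A + BK)ᵀP + P(A + BK) is negative definite. Define T := [I_{n_y}; −P₁₂ᵀ/P₂₂] ∈ ℝ^{n×n_y} and the Schur complement P_y := P₁₁ − P₁₂P₂₂⁻¹P₁₂ᵀ. Then TᵀP = [P_y, 0] (block row), TᵀPB = 0, P_y is positive definite, and P_y(H₁ − H₂P₂₂⁻¹P₁₂ᵀ) + (H₁ − H₂P₂₂⁻¹P₁₂ᵀ)ᵀP_y is negative definite.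 -/
open Matrix Filter Topology Asymptotics

noncomputable section

/-!
The columns of `T` span the `P`-orthogonal complement of the second coordinate block, so `TᵀP`
vanishes on that block, and compressing a quadratic form by `T` keeps definiteness because `T` is
injective. Compressing `P` gives the Schur complement `P_y`. Feedback through `B` changes only the
bottom block row of the closed loop `M = A + BK`, which `TᵀP = [P_y 0]` ignores: `TᵀPMT` is `P_y`
times the top block of `MT`, namely `P_y(H₁ - H₂P₂₂⁻¹P₁₂ᵀ)`.
-/

section SchurComplement

variable {m n R : Type*} [Fintype n] [DecidableEq n] [CommRing R]

/-- The Schur complement `A - B D⁻¹ C` of the lower right block of `[[A, B], [C, D]]`. As `D⁻¹` is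
the total matrix inverse, this is meaningful only for invertible `D`. The blocks need not come from
a square matrix: the reduced dynamics `H₁ - H₂ P₂₂⁻¹ P₁₂ᵀ` mixes those of two different matrices. -/
def schurComplement {k l : Type*} (A : Matrix k l R) (B : Matrix k n R) (C : Matrix n l R)
    (D : Matrix n n R) : Matrix k l R :=
  A - B * D⁻¹ * C

/-- The matrix `[1; -D⁻¹ C]`, whose columns parametrize the kernel of the block row `[C, D]` when
`D` is invertible. It is the `T` of the backstepping computation for `C = P₁₂ᵀ`, `D = P₂₂`. -/
def schurEmbedding [DecidableEq m] (C : Matrix n m R) (D : Matrix n n R) : Matrix (m ⊕ n) m R :=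
  fromRows 1 (-(D⁻¹ * C))

lemma schurComplement_self {C : Matrix n m R} {D : Matrix n n R} (hD : IsUnit D) :
    schurComplement C D C D = 0 := by
  rw [schurComplement, mul_nonsing_inv D (D.isUnit_iff_isUnit_det.mp hD), Matrix.one_mul, sub_self]

variable [Fintype m] [DecidableEq m]

lemma fromBlocks_mul_schurEmbedding {k l : Type*} (A : Matrix k m R) (B : Matrix k n R)
    (A' : Matrix l m R) (B' : Matrix l n R) (C : Matrix n m R) (D : Matrix n n R) :
    fromBlocks A B A' B' * schurEmbedding C D =
      fromRows (schurComplement A B C D) (schurComplement A' B' C D) := by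
  simp only [schurEmbedding, schurComplement, fromBlocks_mul_fromRows, Matrix.mul_one,
    Matrix.mul_neg, Matrix.mul_assoc, sub_eq_add_neg]

lemma fromCols_mul_schurEmbedding {k : Type*} (A : Matrix k m R) (C : Matrix n m R)
    (D : Matrix n n R) : fromCols A (0 : Matrix k n R) * schurEmbedding C D = A := by
  simp only [schurEmbedding, fromCols_mul_fromRows, Matrix.mul_one, Matrix.zero_mul, add_zero]

lemma schurEmbedding_mulVec_injective (C : Matrix n m R) (D : Matrix n n R) :
    Function.Injective (schurEmbedding C D).mulVec := by
  intro x y hxy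
  ext i
  simpa only [schurEmbedding, fromRows_mulVec, one_mulVec, Sum.elim_inl] using
    congrFun hxy (Sum.inl i)

lemma conjTranspose_schurEmbedding_mul_fromBlocks [StarRing R] {A : Matrix m m R}
    {B : Matrix m n R} {D : Matrix n n R} (hP : (fromBlocks A B Bᴴ D).IsHermitian)
    (hD : IsUnit D) :
    (schurEmbedding Bᴴ D)ᴴ * fromBlocks A B Bᴴ D = fromCols (schurComplement A B Bᴴ D) 0 := by
  have hD_herm : D.IsHermitian := (isHermitian_fromBlocks_iff.mp hP).2.2.2
  have hS : (schurComplement A B Bᴴ D).IsHermitian := (IsHermitian.fromBlocks₂₂ A B hD_herm).mp hP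
  calc (schurEmbedding Bᴴ D)ᴴ * fromBlocks A B Bᴴ D
      = (fromBlocks A B Bᴴ D * schurEmbedding Bᴴ D)ᴴ := by rw [conjTranspose_mul, hP.eq]
    _ = fromCols (schurComplement A B Bᴴ D) 0 := by
      rw [fromBlocks_mul_schurEmbedding, schurComplement_self hD,
        conjTranspose_fromRows_eq_fromCols_conjTranspose, hS.eq, conjTranspose_zero]

end SchurComplement

section PosDef

variable {m n 𝕜 : Type*} [Fintype n] [DecidableEq n] [Field 𝕜] [PartialOrder 𝕜] [StarRing 𝕜]
  {P₁₁ : Matrix m m 𝕜} {P₁₂ : Matrix m n 𝕜} {P₂₂ : Matrix n n 𝕜}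

lemma isUnit₂₂_of_posDef_fromBlocks {P₂₁ : Matrix n m 𝕜}
    (hP : (fromBlocks P₁₁ P₁₂ P₂₁ P₂₂).PosDef) : IsUnit P₂₂ :=
  (hP.submatrix Sum.inr_injective).isUnit

lemma schurComplement_posDef [Finite m] (hP : (fromBlocks P₁₁ P₁₂ P₁₂ᴴ P₂₂).PosDef) :
    (schurComplement P₁₁ P₁₂ P₁₂ᴴ P₂₂).PosDef := by
  classical
  have := Fintype.ofFinite m
  have h := hP.conjTranspose_mul_mul_same (schurEmbedding_mulVec_injective P₁₂ᴴ P₂₂)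
  rwa [conjTranspose_schurEmbedding_mul_fromBlocks hP.isHermitian
    (isUnit₂₂_of_posDef_fromBlocks hP), fromCols_mul_schurEmbedding] at h

lemma neg_lyapunov_schurComplement_posDef [Fintype m]
    (hP : (fromBlocks P₁₁ P₁₂ P₁₂ᴴ P₂₂).PosDef)
    {M₁₁ : Matrix m m 𝕜} {M₁₂ : Matrix m n 𝕜} {M₂₁ : Matrix n m 𝕜} {M₂₂ : Matrix n n 𝕜}
    (hM : (-((fromBlocks M₁₁ M₁₂ M₂₁ M₂₂)ᴴ * fromBlocks P₁₁ P₁₂ P₁₂ᴴ P₂₂ +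
      fromBlocks P₁₁ P₁₂ P₁₂ᴴ P₂₂ * fromBlocks M₁₁ M₁₂ M₂₁ M₂₂)).PosDef) :
    (-(schurComplement P₁₁ P₁₂ P₁₂ᴴ P₂₂ * schurComplement M₁₁ M₁₂ P₁₂ᴴ P₂₂ +
      (schurComplement M₁₁ M₁₂ P₁₂ᴴ P₂₂)ᴴ * schurComplement P₁₁ P₁₂ P₁₂ᴴ P₂₂)).PosDef := by
  classical
  set P := fromBlocks P₁₁ P₁₂ P₁₂ᴴ P₂₂
  set M := fromBlocks M₁₁ M₁₂ M₂₁ M₂₂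
  set T := schurEmbedding P₁₂ᴴ P₂₂
  set S := schurComplement P₁₁ P₁₂ P₁₂ᴴ P₂₂
  set N := schurComplement M₁₁ M₁₂ P₁₂ᴴ P₂₂
  have hTPMT : Tᴴ * (P * M) * T = S * N := calc
    Tᴴ * (P * M) * T = (Tᴴ * P) * (M * T) := by simp only [Matrix.mul_assoc]
    _ = S * N := by
      rw [conjTranspose_schurEmbedding_mul_fromBlocks hP.isHermitian
          (isUnit₂₂_of_posDef_fromBlocks hP), fromBlocks_mul_schurEmbedding, fromCols_mul_fromRows,
        Matrix.zero_mul, add_zero]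
  have hTMPT : Tᴴ * (Mᴴ * P) * T = Nᴴ * S := calc
    Tᴴ * (Mᴴ * P) * T = (Tᴴ * (P * M) * T)ᴴ := by
      simp only [conjTranspose_mul, conjTranspose_conjTranspose, hP.isHermitian.eq,
        Matrix.mul_assoc]
    _ = Nᴴ * S := by
      rw [hTPMT, conjTranspose_mul, (schurComplement_posDef hP).isHermitian.eq]
  have h := hM.conjTranspose_mul_mul_same (schurEmbedding_mulVec_injective P₁₂ᴴ P₂₂)
  rwa [Matrix.mul_neg, Matrix.neg_mul, Matrix.mul_add, Matrix.add_mul, hTPMT, hTMPT, add_comm] at h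

end PosDef

lemma fromBlocks_add_fromRows_zero_mul {k l m n p R : Type*} [Fintype p] [Semiring R]
    (A : Matrix k m R) (B : Matrix k n R) (C : Matrix l m R)
    (D : Matrix l n R) (G : Matrix l p R) (K : Matrix p (m ⊕ n) R) :
    fromBlocks A B C D + fromRows 0 G * K =
      fromBlocks A B (C + G * K.toCols₁) (D + G * K.toCols₂) := by
  conv_lhs => rw [← fromCols_toCols K]
  simp only [fromRows_mul_fromCols, Matrix.zero_mul, fromBlocks_add, add_zero]

section ScalarBlock

variable {m ι 𝕜 : Type*} [Fintype ι] [DecidableEq ι] [Field 𝕜]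

lemma inv_of_const [Subsingleton ι] (d : 𝕜) :
    (Matrix.of fun _ _ => d : Matrix ι ι 𝕜)⁻¹ = Matrix.of fun _ _ => d⁻¹ := by
  ext i j
  rw [inv_subsingleton, Subsingleton.elim j i, diagonal_apply_eq, of_apply, of_apply,
    Ring.inverse_eq_inv]

variable [Unique ι]

lemma inv_of_const_mul_replicateRow (v : m → 𝕜) (d : 𝕜) :
    (Matrix.of fun _ _ => d : Matrix ι ι 𝕜)⁻¹ * replicateRow ι v = replicateRow ι (d⁻¹ • v) := by
  ext i j
  simp only [inv_of_const, Matrix.mul_apply, of_apply, replicateRow_apply, Fintype.sum_unique,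
    Pi.smul_apply, smul_eq_mul]

lemma schurComplement_replicateCol_replicateRow {k l : Type*} (A : Matrix k l 𝕜) (u : k → 𝕜)
    (v : l → 𝕜) (d : 𝕜) :
    schurComplement A (replicateCol ι u) (replicateRow ι v) (Matrix.of fun _ _ => d) =
      A - d⁻¹ • vecMulVec u v := by
  rw [schurComplement, Matrix.mul_assoc, inv_of_const_mul_replicateRow, ← vecMulVec_smul]
  congr 1
  ext i j
  simp only [Matrix.mul_apply, replicateCol_apply, replicateRow_apply, Fintype.sum_unique,
    vecMulVec_apply]

lemma schurEmbedding_replicateRow [DecidableEq m] (v : m → 𝕜) (d : 𝕜) :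
    schurEmbedding (replicateRow ι v) (Matrix.of fun _ _ => d) =
      Matrix.of fun i j => Sum.elim (fun i' => if i' = j then 1 else 0) (fun _ => -v j / d) i := by
  rw [schurEmbedding, inv_of_const_mul_replicateRow]
  ext (i | i) j
  · rfl
  · change -(d⁻¹ * v j) = -v j / d
    rw [neg_div, div_eq_inv_mul]

end ScalarBlock

theorem stmt13_general {m n p 𝕜 : Type*} [Fintype m] [Fintype n] [Fintype p] [DecidableEq m]
    [DecidableEq n] [Field 𝕜] [PartialOrder 𝕜] [StarRing 𝕜]
    {P₁₁ : Matrix m m 𝕜} {P₁₂ : Matrix m n 𝕜} {P₂₂ : Matrix n n 𝕜}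
    {H₁ : Matrix m m 𝕜} {H₂ : Matrix m n 𝕜} {F₁ : Matrix n m 𝕜} {F₂ : Matrix n n 𝕜}
    {G : Matrix n p 𝕜} {K : Matrix p (m ⊕ n) 𝕜} {P A : Matrix (m ⊕ n) (m ⊕ n) 𝕜}
    {B : Matrix (m ⊕ n) p 𝕜} {T : Matrix (m ⊕ n) m 𝕜} {Py Hy : Matrix m m 𝕜}
    (hP : P = fromBlocks P₁₁ P₁₂ P₁₂ᴴ P₂₂) (hPpos : P.PosDef)
    (hA : A = fromBlocks H₁ H₂ F₁ F₂) (hB : B = fromRows 0 G)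
    (hLyap : (-((A + B * K)ᴴ * P + P * (A + B * K))).PosDef)
    (hT : T = schurEmbedding P₁₂ᴴ P₂₂) (hPy : Py = schurComplement P₁₁ P₁₂ P₁₂ᴴ P₂₂)
    (hHy : Hy = schurComplement H₁ H₂ P₁₂ᴴ P₂₂) :
    Tᴴ * P = fromCols Py 0 ∧ Tᴴ * P * B = 0 ∧ Py.PosDef ∧ (-(Py * Hy + Hyᴴ * Py)).PosDef := by
  subst hP hA hB hT hPy hHy
  have hTP := conjTranspose_schurEmbedding_mul_fromBlocks hPpos.isHermitian
    (isUnit₂₂_of_posDef_fromBlocks hPpos)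
  rw [fromBlocks_add_fromRows_zero_mul] at hLyap
  refine ⟨hTP, ?_, schurComplement_posDef hPpos, neg_lyapunov_schurComplement_posDef hPpos hLyap⟩
  rw [hTP, fromCols_mul_fromRows, Matrix.mul_zero, Matrix.zero_mul, add_zero]

/-- Block computation for the backstepping Lyapunov matrix: with
`T := [I ; −P₁₂ᵀ/P₂₂]` and the Schur complement `P_y := P₁₁ − P₁₂P₂₂⁻¹P₁₂ᵀ`, one has
`TᵀP = [P_y 0]`, `TᵀPB = 0`, `P_y` is positive definite, and
`P_y(H₁ − H₂P₂₂⁻¹P₁₂ᵀ) + (H₁ − H₂P₂₂⁻¹P₁₂ᵀ)ᵀP_y` is negative definite. -/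
theorem stmt13 {ny : ℕ}
    (P₁₁ : Matrix (Fin ny) (Fin ny) ℝ) (P₁₂ : Fin ny → ℝ) (P₂₂ : ℝ) (hP₂₂ : 0 < P₂₂)
    (H₁ : Matrix (Fin ny) (Fin ny) ℝ) (H₂ F₁ : Fin ny → ℝ) (F₂ G : ℝ)
    (P : Matrix (Fin ny ⊕ Fin 1) (Fin ny ⊕ Fin 1) ℝ)
    (hP : P = Matrix.fromBlocks P₁₁ (Matrix.of fun i _ => P₁₂ i)
        (Matrix.of fun _ j => P₁₂ j) (Matrix.of fun _ _ => P₂₂))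
    (hPpos : P.PosDef)
    (A : Matrix (Fin ny ⊕ Fin 1) (Fin ny ⊕ Fin 1) ℝ)
    (hA : A = Matrix.fromBlocks H₁ (Matrix.of fun i _ => H₂ i)
        (Matrix.of fun _ j => F₁ j) (Matrix.of fun _ _ => F₂))
    (B : Matrix (Fin ny ⊕ Fin 1) (Fin 1) ℝ)
    (hB : B = Matrix.of fun i (_ : Fin 1) => Sum.elim (fun _ => (0:ℝ)) (fun _ => G) i)
    (K : Matrix (Fin 1) (Fin ny ⊕ Fin 1) ℝ)
    (hLyap : (-((A + B * K)ᵀ * P + P * (A + B * K))).PosDef)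
    (T : Matrix (Fin ny ⊕ Fin 1) (Fin ny) ℝ)
    (hT : T = Matrix.of fun i j =>
        Sum.elim (fun i' => if i' = j then (1:ℝ) else 0) (fun _ => -P₁₂ j / P₂₂) i)
    (Py : Matrix (Fin ny) (Fin ny) ℝ)
    (hPy : Py = P₁₁ - P₂₂⁻¹ • Matrix.vecMulVec P₁₂ P₁₂) :
    Tᵀ * P = (Matrix.of fun i j => Sum.elim (fun j' => Py i j') (fun _ => (0:ℝ)) j) ∧
    Tᵀ * P * B = 0 ∧
    Py.PosDef ∧
    (-(Py * (H₁ - P₂₂⁻¹ • Matrix.vecMulVec H₂ P₁₂)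
        + (H₁ - P₂₂⁻¹ • Matrix.vecMulVec H₂ P₁₂)ᵀ * Py)).PosDef := by
  have hP₂₁ : (replicateCol (Fin 1) P₁₂)ᴴ = replicateRow (Fin 1) P₁₂ := by
    rw [conjTranspose_replicateCol, star_trivial]
  have hB' : B = fromRows 0 (Matrix.of fun _ _ => G) := by
    rw [hB]
    ext (i | i) j <;> rfl
  rw [← schurEmbedding_replicateRow (ι := Fin 1), ← hP₂₁] at hT
  rw [← schurComplement_replicateCol_replicateRow (ι := Fin 1), ← hP₂₁] at hPy
  rw [← schurComplement_replicateCol_replicateRow (ι := Fin 1), ← hP₂₁]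
  exact stmt13_general (hP.trans (congrArg (fromBlocks _ _ · _) hP₂₁.symm)) hPpos hA hB' hLyap
    hT hPy rfl
end
end

section
/- Consider the strict-feedback system dy/dt = h₁(y) + h₂(y)x, dx/dt = f(y,x) + g(y,x)u with y ∈ ℝ^{n_y}, x ∈ ℝ, u ∈ ℝ, where h₁, h₂, f, g are continuous and g(y,x) ≠ 0 for all (y,x); write a(y,x) := (h₁(y) + h₂(y)x, f(y,x)) and b(y,x) := (0, g(y,x)) ∈ ℝ^{n_y+1}. Let V_y: ℝ^{n_y} → ℝ≥0 be a C¹ proper positive definite function and α_y: ℝ^{n_y} → ℝ a C¹ function with α_y(0) = 0 such that ∇V_y(y)·(h₁(y) + h₂(y)α_y(y)) < 0 for all y ≠ 0, and let P₂₂ > 0. Define V(y,x) := V_y(y) + P₂₂(x − α_y(y))². Then V is proper and positive definite on ℝ^{n_y+1}, ∇V(y,x)·b(y,x) = 2P₂₂(x − α_y(y))g(y,x), and for every (y,x) ≠ (0,0), ∇V(y,x)·b(y,x) = 0 implies ∇V(y,x)·a(y,x) < 0. -/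
open Matrix Filter Topology Asymptotics

noncomputable section

/-!
The shear `(y, x) ↦ (y, x - α y)` turns `V` into the sum `W y + φ e` of two proper positive definite
functions of separate variables. Its inverse maps bounded sets to bounded sets, so `V` is proper.
The derivative of `V` along the input vanishes only on the graph `x = α y`. There the penalty `φ` is
at its minimum and contributes nothing to first order, so `V` decreases exactly as fast as `W` does
under the virtual control `x = α y`.
-/

open Bornology

section Bounded

theorem isBounded_image_of_continuous {E F : Type*} [PseudoMetricSpace E] [ProperSpace E]
    [PseudoMetricSpace F] {α : E → F} (hα : Continuous α)
    ⦃s : Set E⦄ (hs : IsBounded s) : IsBounded (α '' s) :=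
  (hs.isCompact_closure.image hα).isBounded.subset (Set.image_mono subset_closure)

variable {E F : Type*} [Bornology E] [SeminormedAddCommGroup F] {α : E → F}

theorem isBounded_image_shear (hα : ∀ ⦃s⦄, IsBounded s → IsBounded (α '' s))
    ⦃s : Set (E × F)⦄ (hs : IsBounded s) :
    IsBounded ((fun z : E × F => (z.1, z.2 + α z.1)) '' s) := by
  refine (hs.image_fst.prod (hs.image_snd.add (hα hs.image_fst))).subset ?_
  rintro _ ⟨z, hz, rfl⟩
  have hz_fst : z.1 ∈ Prod.fst '' s := Set.mem_image_of_mem _ hz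
  exact ⟨hz_fst, Set.add_mem_add (Set.mem_image_of_mem _ hz) (Set.mem_image_of_mem _ hz_fst)⟩

theorem tendsto_shear_cobounded (hα : ∀ ⦃s⦄, IsBounded s → IsBounded (α '' s)) :
    Tendsto (fun z : E × F => (z.1, z.2 - α z.1)) (cobounded (E × F)) (cobounded (E × F)) := by
  rw [Tendsto, map_eq_comap_of_inverse (n := fun z : E × F => (z.1, z.2 + α z.1))
    (by ext <;> simp) (by ext <;> simp)]
  exact comap_cobounded_le_iff.2 (isBounded_image_shear hα)

end Bounded

section Proper

variable {E F : Type*} [NormedAddCommGroup E] [NormedAddCommGroup F]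

theorem IsProper.add_prod {W : E → ℝ} {φ : F → ℝ} (hW : IsProper W) (hφ : IsProper φ)
    (hW_nonneg : ∀ y, 0 ≤ W y) (hφ_nonneg : ∀ e, 0 ≤ φ e) :
    IsProper fun z : E × F => W z.1 + φ z.2 :=
  tendsto_sup.2
    ⟨(hW.comp tendsto_comap).atTop_add_nonneg fun z => hφ_nonneg z.2,
      .nonneg_add_atTop (fun z => hW_nonneg z.1) (hφ.comp tendsto_comap)⟩

theorem isProper_const_mul_sq {p : ℝ} (hp : 0 < p) : IsProper fun e : ℝ => p * e ^ 2 := by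
  have h_norm : Tendsto (fun e : ℝ => p * ‖e‖ ^ 2) (cobounded ℝ) atTop :=
    ((tendsto_pow_atTop two_ne_zero).comp tendsto_norm_cobounded_atTop).const_mul_atTop hp
  simpa only [IsProper, Real.norm_eq_abs, sq_abs] using h_norm

end Proper

section PosDef

variable {E F : Type*} [NormedAddCommGroup E] [NormedAddCommGroup F]

theorem IsPosDefFn.nonneg {V : E → ℝ} (hV : IsPosDefFn V) (x : E) : 0 ≤ V x := by
  obtain rfl | hx := eq_or_ne x 0
  · exact hV.1.ge
  · exact (hV.2 x hx).le

theorem IsPosDefFn.fderiv_zero [NormedSpace ℝ E] {V : E → ℝ} (hV : IsPosDefFn V) :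
    fderiv ℝ V 0 = 0 :=
  IsLocalMin.fderiv_eq_zero <| .of_forall fun x => hV.1.trans_le (hV.nonneg x)

theorem IsPosDefFn.add_prod {W : E → ℝ} {φ : F → ℝ} (hW : IsPosDefFn W) (hφ : IsPosDefFn φ) :
    IsPosDefFn fun z : E × F => W z.1 + φ z.2 := by
  refine ⟨by simp [hW.1, hφ.1], fun z hz => ?_⟩
  obtain hy | hy := eq_or_ne z.1 0
  · have he : z.2 ≠ 0 := fun he => hz (Prod.ext hy he)
    exact add_pos_of_nonneg_of_pos (hW.nonneg _) (hφ.2 _ he)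
  · exact add_pos_of_pos_of_nonneg (hW.2 _ hy) (hφ.nonneg _)

theorem isPosDefFn_const_mul_sq {p : ℝ} (hp : 0 < p) : IsPosDefFn fun e : ℝ => p * e ^ 2 :=
  ⟨by simp, fun e he => by positivity⟩

end PosDef

/-- The backstepping Lyapunov function on `E × F`: a Lyapunov function `W` for the `y`-subsystem,
plus the penalty `φ` of the deviation of `x` from the virtual control `α y`. -/
def backsteppingLyapunov {E F : Type*} [Sub F] (W : E → ℝ) (φ : F → ℝ) (α : E → F) (z : E × F) :
    ℝ :=
  W z.1 + φ (z.2 - α z.1)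

section Backstepping

variable {E F : Type*} [NormedAddCommGroup E] [NormedAddCommGroup F]
  {W : E → ℝ} {φ : F → ℝ} {α : E → F}

theorem isProper_backsteppingLyapunov (hW : IsProper W) (hφ : IsProper φ)
    (hW_nonneg : ∀ y, 0 ≤ W y) (hφ_nonneg : ∀ e, 0 ≤ φ e)
    (hα : ∀ ⦃s⦄, IsBounded s → IsBounded (α '' s)) :
    IsProper (backsteppingLyapunov W φ α) :=
  (hW.add_prod hφ hW_nonneg hφ_nonneg).comp (tendsto_shear_cobounded hα)

theorem isPosDefFn_backsteppingLyapunov (hW : IsPosDefFn W) (hφ : IsPosDefFn φ) (hα : α 0 = 0) :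
    IsPosDefFn (backsteppingLyapunov W φ α) := by
  refine ⟨by simp [backsteppingLyapunov, hW.1, hφ.1, hα],
    fun z hz => (hW.add_prod hφ).2 (z.1, z.2 - α z.1) fun h => hz ?_⟩
  obtain ⟨hy, he⟩ := Prod.mk_eq_zero.1 h
  exact Prod.ext hy (by rwa [hy, hα, sub_zero] at he)

variable [NormedSpace ℝ E] [NormedSpace ℝ F]

theorem fderiv_backsteppingLyapunov_apply {z : E × F} (hW : DifferentiableAt ℝ W z.1)
    (hφ : DifferentiableAt ℝ φ (z.2 - α z.1)) (hα : DifferentiableAt ℝ α z.1) (w : E × F) :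
    fderiv ℝ (backsteppingLyapunov W φ α) z w =
      fderiv ℝ W z.1 w.1 + fderiv ℝ φ (z.2 - α z.1) (w.2 - fderiv ℝ α z.1 w.1) := by
  have h_fst : HasFDerivAt Prod.fst (ContinuousLinearMap.fst ℝ E F) z := hasFDerivAt_fst
  have h_deviation : HasFDerivAt (fun z : E × F => z.2 - α z.1)
      (.snd ℝ E F - (fderiv ℝ α z.1).comp (.fst ℝ E F)) z :=
    hasFDerivAt_snd.sub (hα.hasFDerivAt.comp z h_fst)
  have h_sum : HasFDerivAt (backsteppingLyapunov W φ α) _ z :=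
    (hW.hasFDerivAt.comp z h_fst).add (hφ.hasFDerivAt.comp z h_deviation)
  rw [h_sum.fderiv]
  rfl

theorem fderiv_backsteppingLyapunov_apply_of_snd_eq {z : E × F} (hz : z.2 = α z.1)
    (hW : DifferentiableAt ℝ W z.1) (hφ : DifferentiableAt ℝ φ 0) (hφ_pos : IsPosDefFn φ)
    (hα : DifferentiableAt ℝ α z.1) (w : E × F) :
    fderiv ℝ (backsteppingLyapunov W φ α) z w = fderiv ℝ W z.1 w.1 := by
  have he : z.2 - α z.1 = 0 := sub_eq_zero.2 hz
  rw [fderiv_backsteppingLyapunov_apply hW (he ▸ hφ) hα, he, hφ_pos.fderiv_zero,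
    _root_.zero_apply, add_zero]

theorem fderiv_backsteppingLyapunov_sq_apply_zero_prod {α : E → ℝ} {z : E × ℝ}
    (hW : DifferentiableAt ℝ W z.1) (hα : DifferentiableAt ℝ α z.1) (p v : ℝ) :
    fderiv ℝ (backsteppingLyapunov W (fun e => p * e ^ 2) α) z (0, v) =
      2 * p * (z.2 - α z.1) * v := by
  have h_penalty (e : ℝ) : HasDerivAt (fun e : ℝ => p * e ^ 2) (p * (2 * e)) e := by
    simpa using (hasDerivAt_pow 2 e).const_mul p
  rw [fderiv_backsteppingLyapunov_apply hW (h_penalty _).differentiableAt hα,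
    (h_penalty _).hasFDerivAt.fderiv]
  simp only [map_zero, sub_zero, zero_add, ContinuousLinearMap.toSpanSingleton_apply, smul_eq_mul]
  ring

end Backstepping

theorem stmt14_general {E : Type*} [NormedAddCommGroup E] [NormedSpace ℝ E]
    (k : E × ℝ → E) (f g : E × ℝ → ℝ) (hg : ∀ z, g z ≠ 0)
    (W : E → ℝ) (hW : Differentiable ℝ W) (hW_proper : IsProper W) (hW_pos : IsPosDefFn W)
    (α : E → ℝ) (hα : Differentiable ℝ α) (hα_bdd : ∀ ⦃s⦄, IsBounded s → IsBounded (α '' s))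
    (hα_zero : α 0 = 0) (hdec : ∀ y, y ≠ 0 → fderiv ℝ W y (k (y, α y)) < 0)
    (p : ℝ) (hp : 0 < p)
    (V : E × ℝ → ℝ) (hV : V = backsteppingLyapunov W (fun e => p * e ^ 2) α) :
    IsProper V ∧ IsPosDefFn V ∧
    (∀ z, fderiv ℝ V z (0, g z) = 2 * p * (z.2 - α z.1) * g z) ∧
    (∀ z, z ≠ 0 → fderiv ℝ V z (0, g z) = 0 → fderiv ℝ V z (k z, f z) < 0) := by
  subst hV
  have h_pos := isPosDefFn_const_mul_sq hp
  have h_input (z : E × ℝ) :=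
    fderiv_backsteppingLyapunov_sq_apply_zero_prod (hW z.1) (hα z.1) p (g z)
  refine ⟨isProper_backsteppingLyapunov hW_proper (isProper_const_mul_sq hp) hW_pos.nonneg
    h_pos.nonneg hα_bdd, isPosDefFn_backsteppingLyapunov hW_pos h_pos hα_zero, h_input, ?_⟩
  rintro ⟨y, x⟩ hz h_zero
  obtain rfl : x = α y := by
    simpa [h_input, hp.ne', hg, sub_eq_zero] using h_zero
  have hy : y ≠ 0 := by
    rintro rfl
    exact hz (by rw [hα_zero, Prod.mk_zero_zero])
  rw [fderiv_backsteppingLyapunov_apply_of_snd_eq rfl (hW y) (by fun_prop) h_pos (hα y)]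
  exact hdec y hy

/-- The backstepping Lyapunov function
`V(y,x) := V_y(y) + P₂₂ (x − α_y(y))²` is proper and positive definite, its derivative
along the input vector field `b(y,x) = (0, g(y,x))` equals `2P₂₂ (x − α_y(y)) g(y,x)`,
and it satisfies the Artstein condition for the strict-feedback system. -/
theorem stmt14 {ny : ℕ}
    (h₁ : (Fin ny → ℝ) → (Fin ny → ℝ)) (h₂ : (Fin ny → ℝ) → (Fin ny → ℝ))
    (f g : ((Fin ny → ℝ) × ℝ) → ℝ)
    (hh₁ : Continuous h₁) (hh₂ : Continuous h₂)
    (hf : Continuous f) (hg : Continuous g) (hgne : ∀ z, g z ≠ 0)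
    (Vy : (Fin ny → ℝ) → ℝ)
    (hVy : ContDiff ℝ 1 Vy) (hVynonneg : ∀ y, 0 ≤ Vy y)
    (hVyproper : IsProper Vy) (hVypos : IsPosDefFn Vy)
    (αy : (Fin ny → ℝ) → ℝ) (hαy : ContDiff ℝ 1 αy) (hαy0 : αy 0 = 0)
    (hdec : ∀ y : Fin ny → ℝ, y ≠ 0 →
      fderiv ℝ Vy y (h₁ y + αy y • h₂ y) < 0)
    (P₂₂ : ℝ) (hP₂₂ : 0 < P₂₂)
    (V : ((Fin ny → ℝ) × ℝ) → ℝ)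
    (hVdef : V = fun z => Vy z.1 + P₂₂ * (z.2 - αy z.1) ^ 2) :
    IsProper V ∧ IsPosDefFn V ∧
    (∀ z : (Fin ny → ℝ) × ℝ,
      fderiv ℝ V z ((0 : Fin ny → ℝ), g z) = 2 * P₂₂ * (z.2 - αy z.1) * g z) ∧
    (∀ z : (Fin ny → ℝ) × ℝ, z ≠ 0 →
      fderiv ℝ V z ((0 : Fin ny → ℝ), g z) = 0 →
      fderiv ℝ V z (h₁ z.1 + z.2 • h₂ z.1, f z) < 0) :=
  stmt14_general (fun z => h₁ z.1 + z.2 • h₂ z.1) f g hgne Vy (hVy.differentiable one_ne_zero)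
    hVyproper hVypos αy (hαy.differentiable one_ne_zero)
    (isBounded_image_of_continuous hαy.continuous) hαy0 hdec P₂₂ hP₂₂ V hVdef
end
end

section
/- Let P₁₁ ∈ ℝ^{n_y×n_y}, P₁₂ ∈ ℝ^{n_y×1}, and P₂₂ > 0, and set P_y := P₁₁ − P₁₂P₂₂⁻¹P₁₂ᵀ. Let V_y: ℝ^{n_y} → ℝ satisfy V_y(y) = yᵀP_y y + o(|y|²) as y → 0, and let α_y: ℝ^{n_y} → ℝ be differentiable at 0 with α_y(0) = 0 and Dα_y(0) = −P₂₂⁻¹P₁₂ᵀ. Then the function V(y,x) := V_y(y) + P₂₂(x − α_y(y))² satisfies V(χ) = χᵀPχ + o(|χ|²) as χ = (y,x) → 0, where P is the block matrix [[P₁₁, P₁₂],[P₁₂ᵀ, P₂₂]]. -/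
open Matrix Filter Topology Asymptotics

noncomputable section

/-! Completing the square in `x` turns `χᵀPχ` into `yᵀP_y y + P₂₂ (x - Dα_y(0) y)²`. Replacing the
linearisation `Dα_y(0) y` by `α_y(y)` perturbs the base of the square, which is `O(‖χ‖)`, by
`o(‖χ‖)`, and hence the square itself by `o(‖χ‖²)`. -/

section SchurComplement

variable {m n K : Type*} [Fintype m]

theorem dotProduct_smul_vecMulVec_mulVec [CommSemiring K] (c : K) (u v w y : m → K) :
    w ⬝ᵥ (c • vecMulVec u v) *ᵥ y = c * ((w ⬝ᵥ u) * (v ⬝ᵥ y)) := by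
  rw [smul_mulVec, dotProduct_smul, vecMulVec_mulVec, op_smul_eq_smul, dotProduct_smul,
    smul_eq_mul, smul_eq_mul, mul_comm (v ⬝ᵥ y)]

variable [Fintype n] [Unique n]

theorem sumElim_dotProduct_fromBlocks_mulVec_sumElim [CommSemiring K]
    (A : Matrix m m K) (b c : m → K) (d : K) (y : m → K) (x : K) :
    (Sum.elim y fun _ => x) ⬝ᵥ
        fromBlocks A (replicateCol n b) (replicateRow n c) (of fun _ _ => d) *ᵥ
          (Sum.elim y fun _ => x) =
      y ⬝ᵥ A *ᵥ y + x * (b ⬝ᵥ y) + x * (c ⬝ᵥ y) + d * x ^ 2 := by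
  have h_col : replicateCol n b *ᵥ (fun _ => x) = x • b := by
    ext i
    simp [mulVec, dotProduct, mul_comm]
  have h_corner : (of fun _ _ : n => d) *ᵥ (fun _ => x) = fun _ => d * x := by
    ext
    simp [mulVec, dotProduct]
  have h_dot (u : n → K) : (fun _ => x) ⬝ᵥ u = x * u default := by
    simp [dotProduct]
  rw [fromBlocks_mulVec, sumElim_dotProduct_sumElim, Sum.elim_comp_inl, Sum.elim_comp_inr, h_col,
    replicateRow_mulVec_eq_const, h_corner, dotProduct_add, dotProduct_smul, h_dot,
    dotProduct_comm y b, smul_eq_mul, Pi.add_apply, Function.const_apply]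
  ring

theorem sumElim_dotProduct_fromBlocks_mulVec_sumElim_eq_schur_add_sq [Field K]
    (A : Matrix m m K) (b : m → K) {d : K} (hd : d ≠ 0) (y : m → K) (x : K) :
    (Sum.elim y fun _ => x) ⬝ᵥ
        fromBlocks A (replicateCol n b) (replicateRow n b) (of fun _ _ => d) *ᵥ
          (Sum.elim y fun _ => x) =
      y ⬝ᵥ (A - d⁻¹ • vecMulVec b b) *ᵥ y + d * (x - -(b ⬝ᵥ y) / d) ^ 2 := by
  rw [sumElim_dotProduct_fromBlocks_mulVec_sumElim, sub_mulVec, dotProduct_sub,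
    dotProduct_smul_vecMulVec_mulVec, dotProduct_comm y b]
  field_simp
  ring

end SchurComplement

section Asymptotics

theorem isLittleO_sq_sub_sq {ι R S : Type*} [SeminormedCommRing R] [NormedDivisionRing S]
    {l : Filter ι} {u v : ι → R} {g : ι → S} (huv : (fun i => u i - v i) =o[l] g)
    (hv : v =O[l] g) : (fun i => u i ^ 2 - v i ^ 2) =o[l] fun i => g i ^ 2 := by
  have hu : u =O[l] g := by simpa only [sub_add_cancel] using huv.isBigO.add hv
  simpa only [sq_sub_sq, sq (g _)] using (hu.add hv).mul_isLittleO huv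

theorem isLittleO_sq_snd_sub_sub_sq_snd_sub_fderiv {𝕜 E : Type*} [NontriviallyNormedField 𝕜]
    [NormedAddCommGroup E] [NormedSpace 𝕜 E] {α : E → 𝕜} {α' : E →L[𝕜] 𝕜}
    (hα : HasFDerivAt α α' 0) (hα0 : α 0 = 0) :
    (fun z : E × 𝕜 => (z.2 - α z.1) ^ 2 - (z.2 - α' z.1) ^ 2) =o[𝓝 0] fun z => ‖z‖ ^ 2 := by
  have h_fst : (Prod.fst : E × 𝕜 → E) =O[𝓝 0] fun z => ‖z‖ := isBigO_fst_prod'.norm_right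
  have h_snd : (Prod.snd : E × 𝕜 → 𝕜) =O[𝓝 0] fun z => ‖z‖ := isBigO_snd_prod'.norm_right
  have h_remainder : (fun y => α' y - α y) =o[𝓝 0] fun y => y := by
    simpa [hα0] using hα.isLittleO.symm
  have h_remainder_fst : (fun z : E × 𝕜 => α' z.1 - α z.1) =o[𝓝 0] fun z => ‖z‖ :=
    (h_remainder.comp_tendsto (continuous_fst.tendsto 0)).trans_isBigO h_fst
  apply isLittleO_sq_sub_sq
  · simpa only [sub_sub_sub_cancel_left] using h_remainder_fst
  · exact h_snd.sub ((α'.isBigO_comp _ _).trans h_fst)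

end Asymptotics

theorem stmt15_general {𝕜 m n : Type*} [NontriviallyNormedField 𝕜] [Fintype m] [Fintype n]
    [Unique n] (P₁₁ : Matrix m m 𝕜) (P₁₂ : m → 𝕜) (P₂₂ : 𝕜) (hP₂₂ : P₂₂ ≠ 0)
    (P : Matrix (m ⊕ n) (m ⊕ n) 𝕜)
    (hP : P = fromBlocks P₁₁ (replicateCol n P₁₂) (replicateRow n P₁₂) (of fun _ _ => P₂₂))
    (Vy : (m → 𝕜) → 𝕜)
    (hVy : (fun y => Vy y - y ⬝ᵥ (P₁₁ - P₂₂⁻¹ • vecMulVec P₁₂ P₁₂) *ᵥ y) =o[𝓝 0]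
      fun y => ‖y‖ ^ 2)
    (αy : (m → 𝕜) → 𝕜) (hαy_diff : DifferentiableAt 𝕜 αy 0) (hαy0 : αy 0 = 0)
    (hDαy : ∀ v, fderiv 𝕜 αy 0 v = -(P₁₂ ⬝ᵥ v) / P₂₂) :
    (fun z : (m → 𝕜) × 𝕜 => (Vy z.1 + P₂₂ * (z.2 - αy z.1) ^ 2) -
        (Sum.elim z.1 fun _ => z.2) ⬝ᵥ P *ᵥ (Sum.elim z.1 fun _ => z.2)) =o[𝓝 0]
      fun z => ‖z‖ ^ 2 := by
  have h_Vy : (fun z : (m → 𝕜) × 𝕜 =>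
      Vy z.1 - z.1 ⬝ᵥ (P₁₁ - P₂₂⁻¹ • vecMulVec P₁₂ P₁₂) *ᵥ z.1) =o[𝓝 0] fun z => ‖z‖ ^ 2 :=
    (hVy.comp_tendsto (continuous_fst.tendsto 0)).trans_isBigO (isBigO_fst_prod'.norm_norm.pow 2)
  have h_sq := (isLittleO_sq_snd_sub_sub_sq_snd_sub_fderiv
    hαy_diff.hasFDerivAt hαy0).const_mul_left P₂₂
  refine (h_Vy.add h_sq).congr_left fun z => ?_
  rw [hP, sumElim_dotProduct_fromBlocks_mulVec_sumElim_eq_schur_add_sq P₁₁ P₁₂ hP₂₂, hDαy]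
  ring

/-- If `V_y(y) = yᵀP_y y + o(‖y‖²)` with `P_y` the Schur complement
`P₁₁ − P₁₂P₂₂⁻¹P₁₂ᵀ`, and `α_y` is differentiable at `0` with `α_y(0) = 0` and
`Dα_y(0) = −P₂₂⁻¹P₁₂ᵀ`, then `V(y,x) := V_y(y) + P₂₂(x − α_y(y))²` satisfies
`V(χ) = χᵀPχ + o(‖χ‖²)` for the block matrix `P = [[P₁₁,P₁₂],[P₁₂ᵀ,P₂₂]]`. -/
theorem stmt15 {ny : ℕ}
    (P₁₁ : Matrix (Fin ny) (Fin ny) ℝ) (P₁₂ : Fin ny → ℝ) (P₂₂ : ℝ) (hP₂₂ : 0 < P₂₂)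
    (P : Matrix (Fin ny ⊕ Fin 1) (Fin ny ⊕ Fin 1) ℝ)
    (hP : P = Matrix.fromBlocks P₁₁ (Matrix.of fun i _ => P₁₂ i)
        (Matrix.of fun _ j => P₁₂ j) (Matrix.of fun _ _ => P₂₂))
    (Vy : (Fin ny → ℝ) → ℝ)
    (hVy : (fun y => Vy y - y ⬝ᵥ (P₁₁ - P₂₂⁻¹ • Matrix.vecMulVec P₁₂ P₁₂).mulVec y)
      =o[nhds (0 : Fin ny → ℝ)] (fun y => ‖y‖ ^ 2))
    (αy : (Fin ny → ℝ) → ℝ)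
    (hαy_diff : DifferentiableAt ℝ αy 0) (hαy0 : αy 0 = 0)
    (hDαy : ∀ v, fderiv ℝ αy 0 v = -(P₁₂ ⬝ᵥ v) / P₂₂) :
    (fun z : (Fin ny → ℝ) × ℝ =>
        (Vy z.1 + P₂₂ * (z.2 - αy z.1) ^ 2)
          - (Sum.elim z.1 fun _ => z.2) ⬝ᵥ P.mulVec (Sum.elim z.1 fun _ => z.2))
      =o[nhds (0 : (Fin ny → ℝ) × ℝ)] (fun z => ‖z‖ ^ 2) :=
  stmt15_general P₁₁ P₁₂ P₂₂ hP₂₂.ne' P hP Vy hVy αy hαy_diff hαy0 hDαy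
end
end

section
/- Let a: ℝ^n → ℝ^n be C¹ with a(0) = 0 and A := Da(0), let b: ℝ^n → ℝ^{n×p} be C¹ with B := b(0), and let K ∈ ℝ^{p×n} be such that A + BK is Hurwitz. Let α₀: ℝ^n → ℝ^p be locally Lipschitz, differentiable at 0, with α₀(0) = 0 and Dα₀(0) = K, and suppose the origin of dχ/dt = a(χ) + b(χ)α₀(χ) is globally asymptotically stable. Then for every positive definite matrix P ∈ ℝ^{n×n} with (A+BK)ᵀP + P(A+BK) negative definite, there exist a C² proper positive definite function V: ℝ^n → ℝ≥0 and ε₂ > 0 such that V(χ) = χᵀPχ for all |χ| ≤ ε₂ (hence H(V)(0) = 2P) and ∇V(χ)·(a(χ) + b(χ)α₀(χ)) < 0 for all χ ≠ 0. -/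
open Matrix Filter Topology Asymptotics

noncomputable section

/- The trajectory from any point `x` reaches a given small neighbourhood `U` of the origin in finite
time. Superposing bumps along it, with radii growing at the Lipschitz rate of `F`, gives a compactly
supported nonnegative smooth function which does not decrease along `F` outside `U`, because the
derivative of the superposition along `F` dominates the difference of its first and last bumps, and
which strictly increases near `x`. Countably many of these cover the space, and a rapidly weighted
sum `u` of them is `C²`, positive, vanishes at infinity and strictly increases along `F` outside
`U`; so `1 / u` is proper and strictly decreases along `F` outside `U`. Near the origin the
linearization makes `Q χ = χᵀPχ` decrease, and blending `Q` with `d + 1 / u` between two level sets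
of `Q` yields `V`. -/

section SmoothTransition

theorem deriv_smoothTransition_nonneg (s : ℝ) : 0 ≤ deriv Real.smoothTransition s :=
  Real.smoothTransition.monotone.deriv_nonneg

theorem deriv_smoothTransition_of_nonpos {s : ℝ} (hs : s ≤ 0) :
    deriv Real.smoothTransition s = 0 := by
  have hmin : IsLocalMin Real.smoothTransition s := Eventually.of_forall fun x => by
    rw [Real.smoothTransition.zero_of_nonpos hs]
    exact Real.smoothTransition.nonneg x
  exact hmin.deriv_eq_zero

theorem deriv_smoothTransition_of_one_le {s : ℝ} (hs : 1 ≤ s) :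
    deriv Real.smoothTransition s = 0 := by
  have hmax : IsLocalMax Real.smoothTransition s := Eventually.of_forall fun x => by
    rw [Real.smoothTransition.one_of_one_le hs]
    exact Real.smoothTransition.le_one x
  exact hmax.deriv_eq_zero

theorem hasDerivAt_smoothTransition (s : ℝ) :
    HasDerivAt Real.smoothTransition (deriv Real.smoothTransition s) s :=
  (Real.smoothTransition.contDiffAt (n := 1).differentiableAt one_ne_zero).hasDerivAt

end SmoothTransition

section ParametricIntegral

open MeasureTheory

variable {P E G : Type*} [NormedAddCommGroup P] [NormedSpace ℝ P] [NormedAddCommGroup E]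
  [NormedSpace ℝ E] [NormedAddCommGroup G] [NormedSpace ℝ G] {f : P × E → G} {γ : ℝ → P}

theorem continuous_fderiv_comp_inr (hf : ContDiff ℝ 1 f) (hγ : Continuous γ) :
    Continuous fun q : ℝ × E =>
      (fderiv ℝ f (γ q.1, q.2)).comp (ContinuousLinearMap.inr ℝ P E) := by
  have hf' : Continuous fun q : ℝ × E => fderiv ℝ f (γ q.1, q.2) :=
    (hf.continuous_fderiv one_ne_zero).comp (by fun_prop)
  exact hf'.clm_comp continuous_const

theorem hasFDerivAt_intervalIntegral_comp [ProperSpace E] (hf : ContDiff ℝ 1 f)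
    (hγ : Continuous γ) (a b : ℝ) (y : E) :
    HasFDerivAt (fun y => ∫ t in a..b, f (γ t, y))
      (∫ t in a..b, (fderiv ℝ f (γ t, y)).comp (ContinuousLinearMap.inr ℝ P E)) y := by
  have hf_cont : Continuous f := hf.continuous
  have hf'_cont := continuous_fderiv_comp_inr hf hγ
  obtain ⟨C, hC⟩ := (isCompact_uIcc (a := a) (b := b)).prod (isCompact_closedBall y 1)
    |>.exists_bound_of_continuousOn hf'_cont.continuousOn
  refine intervalIntegral.hasFDerivAt_integral_of_dominated_of_fderiv_le (𝕜 := ℝ)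
    (F := fun y t => f (γ t, y))
    (F' := fun y t => (fderiv ℝ f (γ t, y)).comp (ContinuousLinearMap.inr ℝ P E))
    (bound := fun _ => C) (Metric.ball_mem_nhds y one_pos)
    (Eventually.of_forall fun x => Continuous.aestronglyMeasurable (by fun_prop))
    (Continuous.intervalIntegrable (by fun_prop) _ _)
    (hf'_cont.comp (Continuous.prodMk_left y)).aestronglyMeasurable
    (Eventually.of_forall fun t ht x hx =>
      hC (t, x) ⟨Set.uIoc_subset_uIcc ht, Metric.ball_subset_closedBall hx⟩)
    intervalIntegrable_const
    (Eventually.of_forall fun t _ x _ => ?_)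
  exact ((hf.differentiable one_ne_zero) (γ t, x)).hasFDerivAt.comp x
    (hasFDerivAt_prodMk_right (γ t) x)

theorem fderiv_intervalIntegral_comp_apply [ProperSpace E] (hf : ContDiff ℝ 1 f)
    (hγ : Continuous γ) (a b : ℝ) (y w : E) :
    fderiv ℝ (fun y => ∫ t in a..b, f (γ t, y)) y w =
      ∫ t in a..b, fderiv ℝ f (γ t, y) (0, w) := by
  have hint : IntervalIntegrable (fun t => (fderiv ℝ f (γ t, y)).comp
      (ContinuousLinearMap.inr ℝ P E)) volume a b :=
    ((continuous_fderiv_comp_inr hf hγ).comp (Continuous.prodMk_left y)).intervalIntegrable _ _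
  rw [(hasFDerivAt_intervalIntegral_comp hf hγ a b y).fderiv,
    ContinuousLinearMap.intervalIntegral_apply hint]
  simp only [ContinuousLinearMap.comp_apply, ContinuousLinearMap.inr_apply]

theorem contDiff_intervalIntegral_comp [FiniteDimensional ℝ E] {n : ℕ} (hf : ContDiff ℝ n f)
    (hγ : Continuous γ) (a b : ℝ) : ContDiff ℝ n fun y => ∫ t in a..b, f (γ t, y) := by
  induction n generalizing f with
  | zero =>
    have hf_cont : Continuous f := hf.continuous
    refine contDiff_zero.2
      (intervalIntegral.continuous_parametric_intervalIntegral_of_continuous' ?_ _ _)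
    fun_prop
  | succ n ih =>
    have hf₁ : ContDiff ℝ 1 f := hf.of_le (by exact_mod_cast Nat.le_add_left 1 n)
    push_cast at hf ⊢
    refine contDiff_succ_iff_fderiv_apply.2
      ⟨fun y => (hasFDerivAt_intervalIntegral_comp hf₁ hγ a b y).differentiableAt, by simp,
        fun w => ?_⟩
    simp only [fderiv_intervalIntegral_comp_apply hf₁ hγ]
    exact ih ((hf.fderiv_right le_rfl).clm_apply contDiff_const)

end ParametricIntegral

section Tube

open MeasureTheory Set
open scoped InnerProductSpace

variable {E : Type*} [NormedAddCommGroup E]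

/-- A smooth bump on the ball of radius `κ ^ (-1/2)` about `x`, equal to `1` at `x`. The arguments
are packed as `((κ, x), y)`, the parameters first, so that it can be integrated along a curve of
parameters `(κ, x)`. -/
def tubeBump (q : (ℝ × E) × E) : ℝ :=
  Real.smoothTransition (1 - q.1.1 * ‖q.2 - q.1.2‖ ^ 2)

/-- The parameters of a tube of bumps around the curve `χ`: at time `t` the bump is centred at `χ t`
and has radius `ρ * exp (-L * (T - t))`, which grows at rate `L` to reach `ρ` at time `T`. -/
def tubeCurve (L ρ T : ℝ) (χ : ℝ → E) (t : ℝ) : ℝ × E :=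
  (Real.exp (2 * L * (T - t)) / ρ ^ 2, χ t)

/-- The superposition over `t ∈ [0, T]` of the bumps of a tube around the curve `χ`. -/
def tubeFunction (L ρ T : ℝ) (χ : ℝ → E) (y : E) : ℝ :=
  ∫ t in (0 : ℝ)..T, tubeBump (tubeCurve L ρ T χ t, y)

theorem tubeBump_nonneg (q : (ℝ × E) × E) : 0 ≤ tubeBump q :=
  Real.smoothTransition.nonneg _

theorem tubeBump_center (κ : ℝ) (x : E) : tubeBump ((κ, x), x) = 1 := by
  simp [tubeBump]

variable {L ρ T t : ℝ} {χ : ℝ → E} {y : E}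

theorem continuous_tubeCurve (hχ : Continuous χ) : Continuous (tubeCurve L ρ T χ) :=
  Continuous.prodMk (by fun_prop) hχ

theorem one_le_tubeCurve_mul_sq (hL : 0 ≤ L) (hρ : 0 < ρ) (ht : t ≤ T) (hy : ρ ≤ ‖y - χ t‖) :
    1 ≤ (tubeCurve L ρ T χ t).1 * ‖y - χ t‖ ^ 2 := by
  have hexp : 1 ≤ Real.exp (2 * L * (T - t)) :=
    Real.one_le_exp (mul_nonneg (by positivity) (sub_nonneg.2 ht))
  calc 1 ≤ Real.exp (2 * L * (T - t)) := hexp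
    _ = Real.exp (2 * L * (T - t)) / ρ ^ 2 * ρ ^ 2 := by field_simp
    _ ≤ (tubeCurve L ρ T χ t).1 * ‖y - χ t‖ ^ 2 := by unfold tubeCurve; gcongr

theorem tubeBump_tubeCurve_eq_zero (hL : 0 ≤ L) (hρ : 0 < ρ) (ht : t ≤ T)
    (hy : ρ ≤ ‖y - χ t‖) : tubeBump (tubeCurve L ρ T χ t, y) = 0 :=
  Real.smoothTransition.zero_of_nonpos
    (sub_nonpos.2 (one_le_tubeCurve_mul_sq hL hρ ht hy))

theorem tubeFunction_nonneg (hT : 0 ≤ T) : 0 ≤ tubeFunction L ρ T χ y :=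
  intervalIntegral.integral_nonneg hT fun _ _ => tubeBump_nonneg _

theorem tubeFunction_eq_zero (hL : 0 ≤ L) (hρ : 0 < ρ) (hT : 0 ≤ T)
    (hy : ∀ t ∈ Icc 0 T, ρ ≤ ‖y - χ t‖) : tubeFunction L ρ T χ y = 0 := by
  refine intervalIntegral.integral_zero_ae (Eventually.of_forall fun t ht => ?_)
  rw [uIoc_of_le hT] at ht
  exact tubeBump_tubeCurve_eq_zero hL hρ ht.2 (hy t (Ioc_subset_Icc_self ht))

theorem hasCompactSupport_tubeFunction [ProperSpace E] (hL : 0 ≤ L) (hρ : 0 < ρ) (hT : 0 ≤ T)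
    (hχ : Continuous χ) : HasCompactSupport (tubeFunction L ρ T χ) := by
  refine HasCompactSupport.of_support_subset_isCompact
    (((isCompact_Icc (a := 0) (b := T)).image hχ).cthickening (r := ρ)) fun y hy => ?_
  contrapose! hy
  refine Function.notMem_support.2 (tubeFunction_eq_zero hL hρ hT fun t ht => ?_)
  contrapose! hy
  exact Metric.mem_cthickening_of_dist_le y (χ t) ρ _ (mem_image_of_mem χ ht)
    (dist_eq_norm y (χ t) ▸ hy.le)

variable [InnerProductSpace ℝ E] {F : E → E}

theorem contDiff_tubeBump {n : ℕ} : ContDiff ℝ n (tubeBump : (ℝ × E) × E → ℝ) := by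
  have hsq : ContDiff ℝ n fun q : (ℝ × E) × E => ‖q.2 - q.1.2‖ ^ 2 :=
    ContDiff.norm_sq ℝ (by fun_prop)
  have harg : ContDiff ℝ n fun q : (ℝ × E) × E => 1 - q.1.1 * ‖q.2 - q.1.2‖ ^ 2 :=
    contDiff_const.sub (ContDiff.mul (by fun_prop) hsq)
  exact (Real.smoothTransition.contDiff (n := n)).comp harg

theorem fderiv_tubeBump_apply (κ : ℝ) (x y w : E) :
    fderiv ℝ tubeBump ((κ, x), y) (0, w) =
      -(deriv Real.smoothTransition (1 - κ * ‖y - x‖ ^ 2) * (2 * κ * ⟪y - x, w⟫_ℝ)) := by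
  have hjoint : HasFDerivAt (fun y => tubeBump ((κ, x), y))
      ((fderiv ℝ tubeBump ((κ, x), y)).comp (ContinuousLinearMap.inr ℝ (ℝ × E) E)) y :=
    ((contDiff_tubeBump (E := E) (n := 1)).differentiable one_ne_zero _).hasFDerivAt.comp y
      (hasFDerivAt_prodMk_right _ y)
  have hexplicit := (hasDerivAt_smoothTransition (1 - κ * ‖y - x‖ ^ 2)).comp_hasFDerivAt y
    ((((hasFDerivAt_id y).sub_const x).norm_sq.const_mul κ).const_sub 1)
  have happly := congrArg (fun D => D w) (hjoint.unique hexplicit)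
  simp only [ContinuousLinearMap.comp_apply, ContinuousLinearMap.inr_apply] at happly
  rw [happly]
  simp only [_root_.smul_apply, _root_.neg_apply, ContinuousLinearMap.comp_apply,
    innerSL_apply_apply, id, ContinuousLinearMap.id_apply, smul_eq_mul, nsmul_eq_mul,
    Nat.cast_ofNat]
  ring

theorem hasDerivAt_tubeBump_tubeCurve {x' : E} (hχ : HasDerivAt χ x' t) :
    HasDerivAt (fun t => tubeBump (tubeCurve L ρ T χ t, y))
      (deriv Real.smoothTransition (1 - (tubeCurve L ρ T χ t).1 * ‖y - χ t‖ ^ 2) *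
        (2 * (tubeCurve L ρ T χ t).1 * (L * ‖y - χ t‖ ^ 2 + ⟪y - χ t, x'⟫_ℝ))) t := by
  have hweight : HasDerivAt (fun t => (tubeCurve L ρ T χ t).1)
      ((tubeCurve L ρ T χ t).1 * (-(2 * L))) t := by
    have hexp := ((((hasDerivAt_id t).const_sub T).const_mul (2 * L)).exp).div_const (ρ ^ 2)
    refine hexp.congr_deriv ?_
    simp only [tubeCurve, id]
    ring
  have hsq : HasDerivAt (fun t => ‖y - χ t‖ ^ 2) (2 * ⟪y - χ t, -x'⟫_ℝ) t :=
    (hχ.const_sub y).norm_sq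
  refine ((hasDerivAt_smoothTransition _).comp t ((hweight.mul hsq).const_sub 1)).congr_deriv ?_
  simp only [Pi.mul_apply, inner_neg_right]
  ring

/- The squared radius of the tube grows at rate `2 * L`, at least as fast as the flow of `F`
spreads nearby trajectories apart; hence the bump, transported by `F`, increases with time. -/
theorem neg_deriv_tubeBump_le_fderiv (hL : 0 ≤ L) (hρ : 0 < ρ) (ht : t ≤ T)
    (hχ : HasDerivAt χ (F (χ t)) t)
    (hF : ∀ y, ‖y - χ t‖ < ρ → ⟪y - χ t, F y - F (χ t)⟫_ℝ ≤ L * ‖y - χ t‖ ^ 2) (y : E) :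
    -deriv (fun t => tubeBump (tubeCurve L ρ T χ t, y)) t ≤
      fderiv ℝ tubeBump (tubeCurve L ρ T χ t, y) (0, F y) := by
  have hκ : 0 ≤ (tubeCurve L ρ T χ t).1 := by unfold tubeCurve; positivity
  have hfderiv := fderiv_tubeBump_apply (tubeCurve L ρ T χ t).1 (χ t) y (F y)
  rw [(hasDerivAt_tubeBump_tubeCurve hχ).deriv, show tubeCurve L ρ T χ t =
    ((tubeCurve L ρ T χ t).1, χ t) from rfl, hfderiv, neg_le_neg_iff]
  rcases lt_or_ge ‖y - χ t‖ ρ with hy | hy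
  · have hspread := hF y hy
    rw [inner_sub_right] at hspread
    have := deriv_smoothTransition_nonneg (1 - (tubeCurve L ρ T χ t).1 * ‖y - χ t‖ ^ 2)
    gcongr
    linarith
  · simp [deriv_smoothTransition_of_nonpos
      (sub_nonpos.2 (one_le_tubeCurve_mul_sq hL hρ ht hy))]

theorem contDiff_tubeFunction [FiniteDimensional ℝ E] {n : ℕ} (hχ : Continuous χ) :
    ContDiff ℝ n (tubeFunction L ρ T χ) :=
  contDiff_intervalIntegral_comp contDiff_tubeBump (continuous_tubeCurve hχ) 0 T

theorem tubeFunction_start_pos (hT : 0 < T) (hχ : Continuous χ) :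
    0 < tubeFunction L ρ T χ (χ 0) := by
  have hcont : Continuous fun t => tubeBump (tubeCurve L ρ T χ t, χ 0) :=
    (contDiff_tubeBump (n := 0)).continuous.comp
      ((continuous_tubeCurve hχ).prodMk continuous_const)
  refine intervalIntegral.integral_pos hT hcont.continuousOn (fun _ _ => tubeBump_nonneg _)
    ⟨0, left_mem_Icc.2 hT.le, ?_⟩
  rw [tubeCurve, tubeBump_center]
  exact one_pos

theorem tubeBump_sub_le_fderiv_tubeFunction [FiniteDimensional ℝ E] (hL : 0 ≤ L) (hρ : 0 < ρ)
    (hT : 0 ≤ T) (hχ_cont : Continuous χ) (hχ : ∀ t ∈ Ioo 0 T, HasDerivAt χ (F (χ t)) t)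
    (hF : ∀ t ∈ Ioo 0 T, ∀ y, ‖y - χ t‖ < ρ →
      ⟪y - χ t, F y - F (χ t)⟫_ℝ ≤ L * ‖y - χ t‖ ^ 2) (y : E) :
    tubeBump (tubeCurve L ρ T χ 0, y) - tubeBump (tubeCurve L ρ T χ T, y) ≤
      fderiv ℝ (tubeFunction L ρ T χ) y (F y) := by
  have hcurve : Continuous fun t => (tubeCurve L ρ T χ t, y) :=
    (continuous_tubeCurve hχ_cont).prodMk continuous_const
  have hbump : Continuous fun t => tubeBump (tubeCurve L ρ T χ t, y) :=
    (contDiff_tubeBump (n := 0)).continuous.comp hcurve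
  have hfderiv : Continuous fun t => fderiv ℝ tubeBump (tubeCurve L ρ T χ t, y) (0, F y) :=
    (((contDiff_tubeBump (n := 1)).continuous_fderiv one_ne_zero).comp hcurve).clm_apply
      continuous_const
  calc _ = -tubeBump (tubeCurve L ρ T χ T, y) - -tubeBump (tubeCurve L ρ T χ 0, y) := by ring
    _ ≤ ∫ t in (0 : ℝ)..T, fderiv ℝ tubeBump (tubeCurve L ρ T χ t, y) (0, F y) :=
      intervalIntegral.sub_le_integral_of_hasDeriv_right_of_le hT hbump.neg.continuousOn
        (fun t ht => (hasDerivAt_tubeBump_tubeCurve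
          (hχ t ht)).differentiableAt.hasDerivAt.neg.hasDerivWithinAt)
        hfderiv.integrableOn_Icc
        fun t ht => neg_deriv_tubeBump_le_fderiv hL hρ ht.2.le (hχ t ht) (hF t ht) y
    _ = fderiv ℝ (tubeFunction L ρ T χ) y (F y) :=
      (fderiv_intervalIntegral_comp_apply contDiff_tubeBump (continuous_tubeCurve hχ_cont)
        0 T y (F y)).symm

end Tube

section AscentBump

open Set
open scoped InnerProductSpace

/-- Part (ii) of `IsGAS`: from every initial condition starts a solution of `χ' = F χ` that exists
on `[0, ∞)` and converges to the origin. -/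
def IsGloballyAttractive {E : Type*} [NormedAddCommGroup E] [NormedSpace ℝ E] (F : E → E) : Prop :=
  ∀ x₀ : E, ∃ χ : ℝ → E, χ 0 = x₀ ∧ (∀ t : ℝ, 0 ≤ t → HasDerivAt χ (F (χ t)) t) ∧
    Tendsto χ atTop (𝓝 0)

theorem IsGloballyAttractive.conj {E E' : Type*} [NormedAddCommGroup E] [NormedSpace ℝ E]
    [NormedAddCommGroup E'] [NormedSpace ℝ E'] {F : E → E} (hF : IsGloballyAttractive F)
    (e : E ≃L[ℝ] E') : IsGloballyAttractive fun z => e (F (e.symm z)) := by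
  intro z
  obtain ⟨χ, hχ₀, hχ, hχ_lim⟩ := hF (e.symm z)
  refine ⟨fun t => e (χ t), by simp [hχ₀], fun t ht => ?_, ?_⟩
  · simpa [Function.comp_def] using e.hasFDerivAt.comp_hasDerivAt t (hχ t ht)
  · simpa [Function.comp_def] using (e.continuous.tendsto 0).comp hχ_lim

/-- A compactly supported nonnegative `C²` function that does not decrease along the vector
field `F` outside `U`. -/
structure IsAscentBump {E : Type*} [NormedAddCommGroup E] [NormedSpace ℝ E] (F : E → E)
    (U : Set E) (v : E → ℝ) : Prop where
  contDiff : ContDiff ℝ 2 v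
  hasCompactSupport : HasCompactSupport v
  nonneg : ∀ x, 0 ≤ v x
  fderiv_nonneg : ∀ x ∉ U, 0 ≤ fderiv ℝ v x (F x)

/-- `v` is positive at `x` and, unless `x ∈ U`, strictly increases along the vector field `F`
at `x`. -/
def StrictAscentAt {E : Type*} [NormedAddCommGroup E] [NormedSpace ℝ E] (F : E → E) (U : Set E)
    (v : E → ℝ) (x : E) : Prop :=
  0 < v x ∧ (x ∈ U ∨ 0 < fderiv ℝ v x (F x))

section NormedSpace

variable {E : Type*} [NormedAddCommGroup E] [NormedSpace ℝ E] {F : E → E} {U : Set E} {v : E → ℝ}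

theorem IsAscentBump.const_smul (hv : IsAscentBump F U v) {c : ℝ} (hc : 0 ≤ c) :
    IsAscentBump F U (c • v) where
  contDiff := hv.contDiff.const_smul c
  hasCompactSupport := hv.hasCompactSupport.smul_left (f := fun _ => c)
  nonneg x := mul_nonneg hc (hv.nonneg x)
  fderiv_nonneg x hx := by
    rw [fderiv_const_smul_field]
    exact mul_nonneg hc (hv.fderiv_nonneg x hx)

theorem StrictAscentAt.const_smul {x : E} (hv : StrictAscentAt F U v x) {c : ℝ} (hc : 0 < c) :
    StrictAscentAt F U (c • v) x := by
  refine ⟨mul_pos hc hv.1, hv.2.imp_right fun h => ?_⟩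
  rw [fderiv_const_smul_field]
  exact mul_pos hc h

theorem isOpen_setOf_strictAscentAt (hv : ContDiff ℝ 1 v) (hF : Continuous F) (hU : IsOpen U) :
    IsOpen {x | StrictAscentAt F U v x} :=
  (isOpen_lt continuous_const hv.continuous).inter
    (hU.union (isOpen_lt continuous_const ((hv.continuous_fderiv one_ne_zero).clm_apply hF)))

end NormedSpace

variable {E : Type*} [NormedAddCommGroup E] [InnerProductSpace ℝ E] {F : E → E} {U : Set E}

theorem exists_inner_sub_le_mul_norm_sq_of_isCompact [ProperSpace E] (hF : LocallyLipschitz F)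
    {s : Set E} (hs : IsCompact s) (ρ : ℝ) :
    ∃ L, 0 ≤ L ∧ ∀ x ∈ s, ∀ y, ‖y - x‖ < ρ → ⟪y - x, F y - F x⟫_ℝ ≤ L * ‖y - x‖ ^ 2 := by
  obtain ⟨L, hL⟩ := hF.locallyLipschitzOn.exists_lipschitzOnWith_of_compact
    (hs.cthickening (r := ρ))
  refine ⟨L, L.coe_nonneg, fun x hx y hy => ?_⟩
  have hy_mem : y ∈ Metric.cthickening ρ s :=
    Metric.mem_cthickening_of_dist_le y x ρ s hx (dist_eq_norm y x ▸ hy.le)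
  have hdist := hL.norm_sub_le hy_mem (Metric.self_subset_cthickening s hx)
  calc ⟪y - x, F y - F x⟫_ℝ ≤ ‖y - x‖ * ‖F y - F x‖ := real_inner_le_norm _ _
    _ ≤ ‖y - x‖ * (L * ‖y - x‖) := by gcongr
    _ = L * ‖y - x‖ ^ 2 := by ring

variable [FiniteDimensional ℝ E] {L ρ T : ℝ} {χ : ℝ → E}

theorem isAscentBump_tubeFunction (hL : 0 ≤ L) (hρ : 0 < ρ) (hT : 0 ≤ T) (hχ_cont : Continuous χ)
    (hχ : ∀ t ∈ Ioo 0 T, HasDerivAt χ (F (χ t)) t)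
    (hF : ∀ t ∈ Ioo 0 T, ∀ y, ‖y - χ t‖ < ρ →
      ⟪y - χ t, F y - F (χ t)⟫_ℝ ≤ L * ‖y - χ t‖ ^ 2)
    (hU : Metric.ball (χ T) ρ ⊆ U) : IsAscentBump F U (tubeFunction L ρ T χ) where
  contDiff := contDiff_tubeFunction (n := 2) hχ_cont
  hasCompactSupport := hasCompactSupport_tubeFunction hL hρ hT hχ_cont
  nonneg _ := tubeFunction_nonneg hT
  fderiv_nonneg y hy := by
    have hend : tubeBump (tubeCurve L ρ T χ T, y) = 0 :=
      tubeBump_tubeCurve_eq_zero hL hρ le_rfl (not_lt.1 fun h => hy (hU (mem_ball_iff_norm.2 h)))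
    calc 0 ≤ tubeBump (tubeCurve L ρ T χ 0, y) := tubeBump_nonneg _
      _ = tubeBump (tubeCurve L ρ T χ 0, y) - tubeBump (tubeCurve L ρ T χ T, y) := by
        rw [hend, sub_zero]
      _ ≤ fderiv ℝ (tubeFunction L ρ T χ) y (F y) :=
        tubeBump_sub_le_fderiv_tubeFunction hL hρ hT hχ_cont hχ hF y

theorem strictAscentAt_tubeFunction (hL : 0 ≤ L) (hρ : 0 < ρ) (hT : 0 < T)
    (hχ_cont : Continuous χ) (hχ : ∀ t ∈ Ioo 0 T, HasDerivAt χ (F (χ t)) t)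
    (hF : ∀ t ∈ Ioo 0 T, ∀ y, ‖y - χ t‖ < ρ →
      ⟪y - χ t, F y - F (χ t)⟫_ℝ ≤ L * ‖y - χ t‖ ^ 2)
    (hU : Metric.ball (χ T) ρ ⊆ U) : StrictAscentAt F U (tubeFunction L ρ T χ) (χ 0) := by
  refine ⟨tubeFunction_start_pos hT hχ_cont, or_iff_not_imp_left.2 fun h₀ => ?_⟩
  have hstart : tubeBump (tubeCurve L ρ T χ 0, χ 0) = 1 := tubeBump_center _ _
  have hend : tubeBump (tubeCurve L ρ T χ T, χ 0) = 0 :=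
    tubeBump_tubeCurve_eq_zero hL hρ le_rfl (not_lt.1 fun h => h₀ (hU (mem_ball_iff_norm.2 h)))
  have hdiff := tubeBump_sub_le_fderiv_tubeFunction hL hρ hT.le hχ_cont hχ hF (χ 0)
  linarith

theorem exists_isAscentBump_strictAscentAt (hF : LocallyLipschitz F)
    (hattr : IsGloballyAttractive F) (hU : U ∈ 𝓝 0) (x : E) :
    ∃ v, IsAscentBump F U v ∧ StrictAscentAt F U v x := by
  obtain ⟨χ, rfl, hχ, hχ_lim⟩ := hattr x
  obtain ⟨ε, hε, hεU⟩ := Metric.mem_nhds_iff.1 hU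
  obtain ⟨T, hT, hχT⟩ := ((eventually_gt_atTop 0).and
    (hχ_lim.eventually (Metric.ball_mem_nhds 0 (half_pos hε)))).exists
  let χ' : ℝ → E := fun t => χ (max 0 t)
  have heq : ∀ t, 0 ≤ t → χ' t = χ t := fun t ht => congrArg χ (max_eq_right ht)
  have hcont : Continuous χ' :=
    ContinuousOn.comp_continuous (s := Ici 0)
      (fun t ht => (hχ t ht).continuousAt.continuousWithinAt) (by fun_prop)
      fun t => le_max_left 0 t
  have hderiv : ∀ t ∈ Ioo 0 T, HasDerivAt χ' (F (χ' t)) t := fun t ht => by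
    rw [heq t ht.1.le]
    exact (hχ t ht.1.le).congr_of_eventuallyEq ((eventually_ge_nhds ht.1).mono heq)
  obtain ⟨L, hL, hFL⟩ := exists_inner_sub_le_mul_norm_sq_of_isCompact hF
    ((isCompact_Icc (a := 0) (b := T)).image hcont) (ε / 2)
  have hF' := fun t (ht : t ∈ Ioo 0 T) => hFL _ (mem_image_of_mem χ' (Ioo_subset_Icc_self ht))
  have hball : Metric.ball (χ' T) (ε / 2) ⊆ U :=
    (Metric.ball_subset_ball' (by
      rw [heq T hT.le]
      linarith [Metric.mem_ball.1 hχT])).trans hεU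
  rw [← heq 0 le_rfl]
  exact ⟨tubeFunction L (ε / 2) T χ',
    isAscentBump_tubeFunction hL (half_pos hε) hT.le hcont hderiv hF' hball,
    strictAscentAt_tubeFunction hL (half_pos hε) hT hcont hderiv hF' hball⟩

end AscentBump

section Summation

variable {ι E G : Type*} [NormedAddCommGroup E] [NormedAddCommGroup G] {b : ι → ℝ}

theorem tendsto_tsum_cobounded_of_hasCompactSupport [ProperSpace E] [CompleteSpace G]
    {g : ι → E → G} (hg : ∀ i, HasCompactSupport (g i)) (hb : Summable b)
    (hgb : ∀ i x, ‖g i x‖ ≤ b i) :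
    Tendsto (fun x => ∑' i, g i x) (Bornology.cobounded E) (𝓝 0) := by
  have hlim : ∀ i, Tendsto (g i) (Bornology.cobounded E) (𝓝 0) := fun i => by
    have hzero : g i =ᶠ[Bornology.cobounded E] 0 := by
      rw [Metric.cobounded_eq_cocompact, ← coclosedCompact_eq_cocompact]
      exact hasCompactSupport_iff_eventuallyEq.1 (hg i)
    exact tendsto_const_nhds.congr' hzero.symm
  simpa only [tsum_zero] using tendsto_tsum_of_dominated_convergence hb hlim
    (Eventually.of_forall fun x i => hgb i x)

variable [NormedSpace ℝ E] [NormedSpace ℝ G]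

theorem exists_pos_forall_norm_iteratedFDeriv_const_smul_le {v : E → G} {n : ℕ}
    (hv : ContDiff ℝ n v) (hsupp : HasCompactSupport v) {δ : ℝ} (hδ : 0 < δ) :
    ∃ c : ℝ, 0 < c ∧ ∀ k ≤ n, ∀ x, ‖iteratedFDeriv ℝ k (c • v) x‖ ≤ δ := by
  have hev : ∀ k ∈ Set.Iic n, ∀ᶠ c in 𝓝[>] (0 : ℝ),
      ∀ x, ‖iteratedFDeriv ℝ k (c • v) x‖ ≤ δ := by
    intro k hk
    have hk' : (k : WithTop ℕ∞) ≤ n := by exact_mod_cast hk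
    obtain ⟨M, hM⟩ := (hsupp.iteratedFDeriv (𝕜 := ℝ) k).exists_bound_of_continuous
      (hv.continuous_iteratedFDeriv hk')
    have hlim : Tendsto (fun c : ℝ => c * M) (𝓝[>] 0) (𝓝 0) := by
      simpa using ((continuous_mul_const M).tendsto 0).mono_left nhdsWithin_le_nhds
    filter_upwards [self_mem_nhdsWithin, hlim.eventually_le_const hδ] with c hc hcM x
    rw [iteratedFDeriv_const_smul_apply (hv.of_le hk').contDiffAt, norm_smul,
      Real.norm_of_nonneg (le_of_lt hc)]
    exact (mul_le_mul_of_nonneg_left (hM x) (le_of_lt hc)).trans hcM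
  obtain ⟨c, hc, hc_pos⟩ := (((Set.finite_Iic n).eventually_all.2 hev).and
    self_mem_nhdsWithin).exists
  exact ⟨c, hc_pos, hc⟩

variable {F : E → E} {U : Set E} {g : ι → E → ℝ}

theorem strictAscentAt_tsum (hg : ∀ i, IsAscentBump F U (g i)) (hb : Summable b)
    (hgb : ∀ k ≤ 2, ∀ i x, ‖iteratedFDeriv ℝ k (g i) x‖ ≤ b i) {x : E}
    (hx : ∃ i, StrictAscentAt F U (g i) x) : StrictAscentAt F U (fun y => ∑' i, g i y) x := by
  have hg_bound : ∀ i y, ‖g i y‖ ≤ b i := fun i y => by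
    simpa using hgb 0 (Nat.zero_le 2) i y
  have hg'_bound : ∀ i y, ‖fderiv ℝ (g i) y‖ ≤ b i := fun i y => by
    simpa using hgb 1 one_le_two i y
  have hsum : ∀ y, Summable fun i => g i y := fun y => hb.of_norm_bounded fun i => hg_bound i y
  have hsum' : HasSum (fun i => fderiv ℝ (g i) x (F x))
      (fderiv ℝ (fun y => ∑' i, g i y) x (F x)) := by
    rw [fderiv_tsum_apply hb (fun i => (hg i).contDiff.differentiable two_ne_zero) hg'_bound
      (hsum 0) x]
    exact (hb.of_norm_bounded fun i => hg'_bound i x).hasSum.mapL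
      (ContinuousLinearMap.apply ℝ ℝ (F x))
  obtain ⟨i, hi_pos, hi⟩ := hx
  refine ⟨(hsum x).tsum_pos (fun j => (hg j).nonneg x) i hi_pos,
    or_iff_not_imp_left.2 fun hxU => ?_⟩
  rw [← hsum'.tsum_eq]
  exact hsum'.summable.tsum_pos (fun j => (hg j).fderiv_nonneg x hxU) i (hi.resolve_left hxU)

end Summation

section Covering

variable {E : Type*} [NormedAddCommGroup E]

theorem exists_seq_isAscentBump_strictAscentAt [InnerProductSpace ℝ E] [FiniteDimensional ℝ E]
    {F : E → E} {U : Set E} (hF : LocallyLipschitz F) (hattr : IsGloballyAttractive F)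
    (hU : IsOpen U) (h0 : 0 ∈ U) :
    ∃ g : ℕ → E → ℝ, (∀ i, IsAscentBump F U (g i)) ∧
      (∀ k ≤ 2, ∀ i x, ‖iteratedFDeriv ℝ k (g i) x‖ ≤ (1 / 2) ^ i) ∧
      ∀ x, ∃ i, StrictAscentAt F U (g i) x := by
  choose v hv hvx using exists_isAscentBump_strictAscentAt hF hattr (hU.mem_nhds h0)
  obtain ⟨s, hs, hs_cover⟩ := TopologicalSpace.countable_cover_nhds fun x =>
    (isOpen_setOf_strictAscentAt ((hv x).contDiff.of_le one_le_two) hF.continuous hU).mem_nhds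
      (hvx x)
  have hs_mem : ∀ x, ∃ z ∈ s, StrictAscentAt F U (v z) x := fun x => by
    simpa using hs_cover.ge (Set.mem_univ x)
  obtain ⟨z₀, hz₀, -⟩ := hs_mem 0
  obtain ⟨z, rfl⟩ := hs.exists_eq_range ⟨z₀, hz₀⟩
  choose c hc hc_bound using fun i => exists_pos_forall_norm_iteratedFDeriv_const_smul_le (n := 2)
    (hv (z i)).contDiff (hv (z i)).hasCompactSupport (show (0 : ℝ) < (1 / 2) ^ i by positivity)
  refine ⟨fun i => c i • v (z i), fun i => (hv (z i)).const_smul (hc i).le,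
    fun k hk i => hc_bound i k hk, fun x => ?_⟩
  obtain ⟨-, ⟨i, rfl⟩, hi⟩ := hs_mem x
  exact ⟨i, hi.const_smul (hc i)⟩

theorem exists_isProper_pos_fderiv_neg_of_inner [InnerProductSpace ℝ E] [FiniteDimensional ℝ E]
    {F : E → E} {U : Set E} (hF : LocallyLipschitz F) (hattr : IsGloballyAttractive F)
    (hU : IsOpen U) (h0 : 0 ∈ U) :
    ∃ W : E → ℝ, ContDiff ℝ 2 W ∧ IsProper W ∧ (∀ x, 0 < W x) ∧
      ∀ x ∉ U, fderiv ℝ W x (F x) < 0 := by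
  obtain ⟨g, hg, hgb, hg_cover⟩ := exists_seq_isAscentBump_strictAscentAt hF hattr hU h0
  set u : E → ℝ := fun x => ∑' i, g i x
  have hu : ContDiff ℝ 2 u := contDiff_tsum (fun i => (hg i).contDiff)
    (fun _ _ => summable_geometric_two) fun k i x hk => hgb k (by exact_mod_cast hk) i x
  have hascent : ∀ x, StrictAscentAt F U u x := fun x =>
    strictAscentAt_tsum hg summable_geometric_two hgb (hg_cover x)
  have hu_lim : Tendsto u (Bornology.cobounded E) (𝓝 0) :=
    tendsto_tsum_cobounded_of_hasCompactSupport (fun i => (hg i).hasCompactSupport)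
      summable_geometric_two fun i x => by simpa using hgb 0 (Nat.zero_le 2) i x
  refine ⟨fun x => (u x)⁻¹, hu.inv fun x => (hascent x).1.ne',
    (tendsto_nhdsWithin_iff.2 ⟨hu_lim, Eventually.of_forall fun x => (hascent x).1⟩)
      |>.inv_tendsto_nhdsGT_zero, fun x => inv_pos.2 (hascent x).1, fun x hx => ?_⟩
  have hfderiv := ((hasDerivAt_inv (hascent x).1.ne').comp_hasFDerivAt x
    (hu.differentiable two_ne_zero x).hasFDerivAt).fderiv
  have hux := (hascent x).1
  have hu'x := (hascent x).2.resolve_left hx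
  calc fderiv ℝ (fun x => (u x)⁻¹) x (F x) = -((u x ^ 2)⁻¹ * fderiv ℝ u x (F x)) := by
        simpa [Function.comp_def] using congrArg (fun D => D (F x)) hfderiv
    _ < 0 := neg_neg_of_pos (by positivity)

theorem exists_isProper_pos_fderiv_neg [NormedSpace ℝ E] [FiniteDimensional ℝ E]
    {F : E → E} {U : Set E} (hF : LocallyLipschitz F) (hattr : IsGloballyAttractive F)
    (hU : IsOpen U) (h0 : 0 ∈ U) :
    ∃ W : E → ℝ, ContDiff ℝ 2 W ∧ IsProper W ∧ (∀ x, 0 < W x) ∧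
      ∀ x ∉ U, fderiv ℝ W x (F x) < 0 := by
  let e : E ≃L[ℝ] EuclideanSpace ℝ (Fin (Module.finrank ℝ E)) := toEuclidean
  obtain ⟨W, hW, hW_proper, hW_pos, hW_neg⟩ := exists_isProper_pos_fderiv_neg_of_inner
    (e.lipschitz.locallyLipschitz.comp (hF.comp e.symm.lipschitz.locallyLipschitz))
    (hattr.conj e) (hU.preimage e.symm.continuous) (by simpa using h0)
  refine ⟨W ∘ e, hW.comp e.contDiff, ?_, fun x => hW_pos (e x), fun x hx => ?_⟩
  · refine hW_proper.comp ?_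
    rw [Metric.cobounded_eq_cocompact, Metric.cobounded_eq_cocompact]
    exact e.toHomeomorph.isClosedEmbedding.tendsto_cocompact
  · rw [((hW.differentiable two_ne_zero (e x)).hasFDerivAt.comp x e.hasFDerivAt).fderiv]
    simpa using hW_neg (e x) (by simpa using hx)

end Covering

section Blend

variable {E : Type*} {Q W : E → ℝ} {c d : ℝ} {x : E}

/-- A function equal to `Q` on `{Q ≤ c}` and to `d + W` on `{d ≤ Q}`. The shift by `d` makes
`d + W - Q` nonnegative on the transition region when `W` is, so that the derivative of the
transition contributes a nonnegative multiple of the derivative of `Q`. -/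
def sublevelBlend (Q W : E → ℝ) (c d : ℝ) (x : E) : ℝ :=
  Q x + Real.smoothTransition ((Q x - c) / (d - c)) * (d + W x - Q x)

theorem sublevelBlend_of_le (hcd : c < d) (hx : Q x ≤ c) : sublevelBlend Q W c d x = Q x := by
  rw [sublevelBlend, Real.smoothTransition.zero_of_nonpos
    (div_nonpos_of_nonpos_of_nonneg (sub_nonpos.2 hx) (sub_pos.2 hcd).le), zero_mul, add_zero]

theorem sublevelBlend_of_ge (hcd : c < d) (hx : d ≤ Q x) :
    sublevelBlend Q W c d x = d + W x := by
  rw [sublevelBlend, Real.smoothTransition.one_of_one_le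
    ((one_le_div (sub_pos.2 hcd)).2 (sub_le_sub_right hx c)), one_mul, add_sub_cancel]

variable [NormedAddCommGroup E]

theorem isProper_sublevelBlend (hcd : c < d) (hQ : IsProper Q) (hW : IsProper W) :
    IsProper (sublevelBlend Q W c d) := by
  refine (tendsto_atTop_add_const_left _ d hW).congr' ?_
  filter_upwards [hQ.eventually_ge_atTop d] with x hx
  exact (sublevelBlend_of_ge hcd hx).symm

theorem isPosDefFn_sublevelBlend (hc : 0 ≤ c) (hcd : c < d) (hQ : IsPosDefFn Q)
    (hW : ∀ x, 0 ≤ W x) : IsPosDefFn (sublevelBlend Q W c d) := by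
  refine ⟨by rw [sublevelBlend_of_le hcd (hQ.1.trans_le hc), hQ.1], fun x hx => ?_⟩
  rcases le_total d (Q x) with hd | hd
  · rw [sublevelBlend_of_ge hcd hd]
    linarith [hW x]
  · exact add_pos_of_pos_of_nonneg (hQ.2 x hx)
      (mul_nonneg (Real.smoothTransition.nonneg _) (by linarith [hW x]))

variable [NormedSpace ℝ E]

theorem contDiff_sublevelBlend {n : ℕ} (hQ : ContDiff ℝ n Q) (hW : ContDiff ℝ n W) :
    ContDiff ℝ n (sublevelBlend Q W c d) :=
  hQ.add ((Real.smoothTransition.contDiff.comp ((hQ.sub contDiff_const).div_const _)).mul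
    ((contDiff_const.add hW).sub hQ))

theorem fderiv_sublevelBlend_apply (hQ : DifferentiableAt ℝ Q x) (hW : DifferentiableAt ℝ W x)
    (w : E) :
    fderiv ℝ (sublevelBlend Q W c d) x w =
      (1 - Real.smoothTransition ((Q x - c) / (d - c))) * fderiv ℝ Q x w +
        Real.smoothTransition ((Q x - c) / (d - c)) * fderiv ℝ W x w +
        deriv Real.smoothTransition ((Q x - c) / (d - c)) * ((d + W x - Q x) / (d - c)) *
          fderiv ℝ Q x w := by
  have hlevel : HasFDerivAt (fun y => (Q y - c) / (d - c)) ((d - c)⁻¹ • fderiv ℝ Q x) x := by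
    simpa only [div_eq_mul_inv] using (hQ.hasFDerivAt.sub_const c).mul_const (d - c)⁻¹
  have htransition := (hasDerivAt_smoothTransition ((Q x - c) / (d - c))).comp_hasFDerivAt x hlevel
  have hblend : HasFDerivAt (sublevelBlend Q W c d) _ x :=
    hQ.hasFDerivAt.add (htransition.mul ((hW.hasFDerivAt.const_add d).sub hQ.hasFDerivAt))
  rw [hblend.fderiv]
  simp only [_root_.add_apply, _root_.smul_apply, _root_.sub_apply, smul_eq_mul,
    Function.comp_apply]
  ring

theorem fderiv_sublevelBlend_neg (hcd : c < d) (hQ : DifferentiableAt ℝ Q x)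
    (hW : DifferentiableAt ℝ W x) {w : E} (hWx : 0 ≤ W x) (hQw : Q x ≤ d → fderiv ℝ Q x w < 0)
    (hWw : c ≤ Q x → fderiv ℝ W x w < 0) : fderiv ℝ (sublevelBlend Q W c d) x w < 0 := by
  rw [fderiv_sublevelBlend_apply hQ hW]
  have hdc : 0 < d - c := sub_pos.2 hcd
  rcases le_total (Q x) c with hxc | hcx
  · have hs : (Q x - c) / (d - c) ≤ 0 :=
      div_nonpos_of_nonpos_of_nonneg (sub_nonpos.2 hxc) hdc.le
    rw [deriv_smoothTransition_of_nonpos hs, Real.smoothTransition.zero_of_nonpos hs]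
    linarith [hQw (hxc.trans hcd.le)]
  rcases le_total d (Q x) with hdx | hxd
  · have hs : 1 ≤ (Q x - c) / (d - c) := (one_le_div hdc).2 (sub_le_sub_right hdx c)
    rw [deriv_smoothTransition_of_one_le hs, Real.smoothTransition.one_of_one_le hs]
    linarith [hWw hcx]
  · have hconvex := convex_Iio (0 : ℝ) (hQw hxd) (hWw hcx)
      (sub_nonneg.2 (Real.smoothTransition.le_one ((Q x - c) / (d - c))))
      (Real.smoothTransition.nonneg _) (sub_add_cancel _ _)
    have htransition := mul_nonneg (deriv_smoothTransition_nonneg ((Q x - c) / (d - c)))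
      (div_nonneg (by linarith : 0 ≤ d + W x - Q x) hdc.le)
    exact add_neg_of_neg_of_nonpos hconvex
      (mul_nonpos_of_nonneg_of_nonpos htransition (hQw hxd).le)

end Blend

section Extension

variable {E : Type*} [NormedAddCommGroup E] {Q : E → ℝ}

theorem exists_pos_setOf_le_subset_of_mem_nhds_zero [ProperSpace E] (hQ : Continuous Q)
    (hproper : IsProper Q) (hpos : IsPosDefFn Q) {s : Set E} (hs : s ∈ 𝓝 0) :
    ∃ d, 0 < d ∧ {x | Q x ≤ d} ⊆ s := by
  rcases (interior s)ᶜ.eq_empty_or_nonempty with hempty | ⟨x, hx⟩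
  · rw [Set.compl_empty_iff] at hempty
    exact ⟨1, one_pos, (Set.subset_univ _).trans (hempty.ge.trans interior_subset)⟩
  · have hcoercive : ∀ᶠ y in cocompact E ⊓ 𝓟 (interior s)ᶜ, Q x ≤ Q y := by
      rw [← Metric.cobounded_eq_cocompact]
      exact (hproper.eventually_ge_atTop (Q x)).filter_mono inf_le_left
    obtain ⟨m, hm, hm_min⟩ := hQ.continuousOn.exists_isMinOn' isOpen_interior.isClosed_compl hx
      hcoercive
    have hQm : 0 < Q m := hpos.2 m fun h => hm (h ▸ mem_interior_iff_mem_nhds.2 hs)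
    refine ⟨Q m / 2, half_pos hQm, fun y hy => ?_⟩
    by_contra hys
    have hmy : Q m ≤ Q y := hm_min fun h => hys (interior_subset h)
    exact absurd (hmy.trans hy) (half_lt_self hQm).not_ge

theorem exists_globalLyapunov_eventuallyEq [NormedSpace ℝ E] [FiniteDimensional ℝ E] {F : E → E}
    (hF : LocallyLipschitz F) (hattr : IsGloballyAttractive F) (hQ : ContDiff ℝ 2 Q)
    (hproper : IsProper Q) (hpos : IsPosDefFn Q)
    (hdecr : ∀ᶠ x in 𝓝[≠] 0, fderiv ℝ Q x (F x) < 0) :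
    ∃ V : E → ℝ, ContDiff ℝ 2 V ∧ IsProper V ∧ IsPosDefFn V ∧ V =ᶠ[𝓝 0] Q ∧
      ∀ x ≠ 0, fderiv ℝ V x (F x) < 0 := by
  obtain ⟨d, hd, hd_sub⟩ := exists_pos_setOf_le_subset_of_mem_nhds_zero hQ.continuous hproper hpos
    (eventually_nhdsWithin_iff.1 hdecr)
  have hopen : IsOpen {x | Q x < d / 2} := isOpen_lt hQ.continuous continuous_const
  have h0 : (0 : E) ∈ {x | Q x < d / 2} := hpos.1.trans_lt (half_pos hd)
  obtain ⟨W, hW, hW_proper, hW_pos, hW_neg⟩ := exists_isProper_pos_fderiv_neg hF hattr hopen h0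
  have hlt : d / 2 < d := half_lt_self hd
  refine ⟨sublevelBlend Q W (d / 2) d, contDiff_sublevelBlend (n := 2) hQ hW,
    isProper_sublevelBlend hlt hproper hW_proper,
    isPosDefFn_sublevelBlend (half_pos hd).le hlt hpos fun x => (hW_pos x).le, ?_, fun x hx => ?_⟩
  · filter_upwards [hopen.mem_nhds h0] with x hx using sublevelBlend_of_le hlt (le_of_lt hx)
  · exact fderiv_sublevelBlend_neg hlt (hQ.differentiable two_ne_zero x)
      (hW.differentiable two_ne_zero x) (hW_pos x).le (fun hxd => hd_sub hxd hx)
      fun hxd => hW_neg x (not_lt.2 hxd)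

end Extension

section Quadratic

variable {E : Type*} [NormedAddCommGroup E] [NormedSpace ℝ E] {S : E →L[ℝ] E →L[ℝ] ℝ}

theorem isCoercive_of_forall_pos [FiniteDimensional ℝ E] (hS : ∀ x ≠ 0, 0 < S x x) :
    IsCoercive S := by
  have hcont : Continuous fun x => S x x := by fun_prop
  obtain ⟨m, hm, hm_le⟩ : ∃ m, 0 < m ∧ ∀ x ∈ Metric.sphere (0 : E) 1, m ≤ S x x := by
    rcases (Metric.sphere (0 : E) 1).eq_empty_or_nonempty with hempty | hne
    · exact ⟨1, one_pos, by simp [hempty]⟩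
    · obtain ⟨z, hz, hz_min⟩ := (isCompact_sphere (0 : E) 1).exists_isMinOn hne hcont.continuousOn
      exact ⟨S z z, hS z (ne_zero_of_mem_unit_sphere ⟨z, hz⟩), fun x hx => hz_min hx⟩
  refine ⟨m, hm, fun x => ?_⟩
  rcases eq_or_ne x 0 with rfl | hx
  · simp
  · have hunit := hm_le (‖x‖⁻¹ • x) (by simp [norm_smul, hx])
    simp only [map_smul, _root_.smul_apply, smul_eq_mul] at hunit
    calc m * ‖x‖ * ‖x‖ ≤ ‖x‖⁻¹ * (‖x‖⁻¹ * S x x) * ‖x‖ * ‖x‖ := by gcongr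
      _ = S x x := by field_simp [norm_ne_zero_iff.2 hx]

theorem isProper_apply_self_of_isCoercive (hS : IsCoercive S) : IsProper fun x => S x x := by
  obtain ⟨C, hC, hS⟩ := hS
  have hnorm := tendsto_norm_cobounded_atTop (E := E)
  exact tendsto_atTop_mono hS ((hnorm.const_mul_atTop hC).atTop_mul_atTop₀ hnorm)

theorem contDiff_apply_self {n : ℕ} : ContDiff ℝ n fun x => S x x :=
  S.contDiff.clm_apply contDiff_id

theorem fderiv_apply_self : fderiv ℝ (fun y => S y y) = ⇑(S + S.flip) := by
  ext x v
  have hself : HasFDerivAt (fun y => S y y) _ x :=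
    S.hasFDerivAt_of_bilinear (hasFDerivAt_id x) (hasFDerivAt_id x)
  rw [hself.fderiv]
  simp

theorem iteratedFDeriv_two_apply_self (x v w : E) :
    iteratedFDeriv ℝ 2 (fun y => S y y) x ![v, w] = S v w + S w v := by
  rw [iteratedFDeriv_two_apply, fderiv_apply_self, ContinuousLinearMap.fderiv]
  simp

variable [FiniteDimensional ℝ E] {L : E →L[ℝ] E} {F : E → E}

theorem eventually_apply_neg_of_hasFDerivAt (hF₀ : F 0 = 0) (hF : HasFDerivAt F L 0)
    (hneg : ∀ x ≠ 0, S x (L x) < 0) : ∀ᶠ x in 𝓝[≠] 0, S x (F x) < 0 := by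
  obtain ⟨C, hC, hC_le⟩ := isCoercive_of_forall_pos (S := -(S.flip.comp L).flip)
    fun x hx => by simpa using hneg x hx
  have hremainder : (fun x => S x (F x - L x)) =o[𝓝 0] fun x => ‖x‖ * ‖x‖ := by
    have hlittle : (fun x => ‖F x - L x‖) =o[𝓝 0] fun x => ‖x‖ := by
      simpa [hF₀] using hF.isLittleO.norm_norm
    refine (IsBigO.of_bound ‖S‖ (Eventually.of_forall fun x => ?_)).trans_isLittleO
      ((isBigO_refl (fun x : E => ‖x‖) (𝓝 0)).mul_isLittleO hlittle)
    simpa [mul_assoc] using S.le_opNorm₂ x (F x - L x)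
  filter_upwards [nhdsWithin_le_nhds (hremainder.def (half_pos hC)), self_mem_nhdsWithin]
    with x hx hx₀
  have hx_pos : 0 < ‖x‖ * ‖x‖ := mul_self_pos.2 (norm_ne_zero_iff.2 hx₀)
  have hlinear : C * (‖x‖ * ‖x‖) ≤ -S x (L x) := by simpa [mul_assoc] using hC_le x
  calc S x (F x) = S x (L x) + S x (F x - L x) := by rw [map_sub, add_sub_cancel]
    _ ≤ -(C * (‖x‖ * ‖x‖)) + C / 2 * (‖x‖ * ‖x‖) := by
      gcongr
      · linarith
      · simpa using (le_abs_self _).trans hx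
    _ < 0 := by linarith [mul_pos hC hx_pos]

theorem exists_globalLyapunov_eventuallyEq_apply_self (hF : LocallyLipschitz F) (hF₀ : F 0 = 0)
    (hL : HasFDerivAt F L 0) (hattr : IsGloballyAttractive F) (hpos : ∀ x ≠ 0, 0 < S x x)
    (hneg : ∀ x ≠ 0, S x (L x) + S (L x) x < 0) :
    ∃ V : E → ℝ, ContDiff ℝ 2 V ∧ IsProper V ∧ IsPosDefFn V ∧ (V =ᶠ[𝓝 0] fun x => S x x) ∧
      ∀ x ≠ 0, fderiv ℝ V x (F x) < 0 := by
  refine exists_globalLyapunov_eventuallyEq hF hattr (contDiff_apply_self (n := 2))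
    (isProper_apply_self_of_isCoercive (isCoercive_of_forall_pos hpos)) ⟨by simp, hpos⟩ ?_
  rw [fderiv_apply_self]
  exact eventually_apply_neg_of_hasFDerivAt hF₀ hL hneg

end Quadratic

section MatrixForm

variable {ι : Type*} [Fintype ι] [DecidableEq ι]

/-- The bilinear form `(x, y) ↦ xᵀ P y` of the matrix `P`. -/
def matrixBilin (P : Matrix ι ι ℝ) : (ι → ℝ) →L[ℝ] (ι → ℝ) →L[ℝ] ℝ :=
  (Matrix.toLinearMap₂' ℝ P).toContinuousBilinearMap

theorem matrixBilin_apply (P : Matrix ι ι ℝ) (x y : ι → ℝ) :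
    matrixBilin P x y = x ⬝ᵥ P *ᵥ y := by
  rw [matrixBilin, LinearMap.toContinuousBilinearMap_apply, Matrix.toLinearMap₂'_apply']

theorem matrixBilin_mulVec_add (P M : Matrix ι ι ℝ) (x : ι → ℝ) :
    matrixBilin P x (M *ᵥ x) + matrixBilin P (M *ᵥ x) x = x ⬝ᵥ (Mᵀ * P + P * M) *ᵥ x := by
  rw [matrixBilin_apply, matrixBilin_apply, Matrix.add_mulVec, dotProduct_add,
    ← Matrix.mulVec_mulVec, ← Matrix.mulVec_mulVec, Matrix.dotProduct_mulVec x Mᵀ,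
    Matrix.vecMul_transpose, add_comm]

theorem hessianAt_congr {n : ℕ} {V W : (Fin n → ℝ) → ℝ} {x : Fin n → ℝ} (h : V =ᶠ[𝓝 x] W) :
    hessianAt V x = hessianAt W x := by
  rw [hessianAt, hessianAt, (h.iteratedFDeriv ℝ 2).eq_of_nhds]

theorem hessianAt_dotProduct_mulVec {n : ℕ} (P : Matrix (Fin n) (Fin n) ℝ) (x : Fin n → ℝ) :
    hessianAt (fun y => y ⬝ᵥ P *ᵥ y) x = P + Pᵀ := by
  ext i j
  simp only [hessianAt, ← matrixBilin_apply, Matrix.of_apply, iteratedFDeriv_two_apply_self]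
  simp [matrixBilin_apply]

end MatrixForm

section ClosedLoop

theorem hasFDerivAt_mulVecLin_of_fderiv {m n : Type*} [Fintype n] {f : (n → ℝ) → m → ℝ}
    {x : n → ℝ} {M : Matrix m n ℝ} (hf : DifferentiableAt ℝ f x)
    (hM : ∀ v, fderiv ℝ f x v = M *ᵥ v) : HasFDerivAt f M.mulVecLin.toContinuousLinearMap x :=
  hf.hasFDerivAt.congr_fderiv (ContinuousLinearMap.ext hM)

variable {m n : Type*} [Fintype m] [Fintype n]

/-- The product `N *ᵥ v` as a continuous bilinear map; the matrix argument is a plain function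
because `Matrix` carries no global norm. -/
def mulVecL : (m → n → ℝ) →L[ℝ] (n → ℝ) →L[ℝ] m → ℝ :=
  (Matrix.mulVecBilin ℝ ℝ ∘ₗ (Matrix.ofLinearEquiv ℝ).toLinearMap).toContinuousBilinearMap

theorem mulVecL_apply (N : m → n → ℝ) (v : n → ℝ) : mulVecL N v = Matrix.of N *ᵥ v := by
  simp [mulVecL]

theorem locallyLipschitz_clm_apply₂ {X E E' G : Type*} [PseudoEMetricSpace X]
    [NormedAddCommGroup E] [NormedSpace ℝ E] [NormedAddCommGroup E'] [NormedSpace ℝ E']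
    [NormedAddCommGroup G] [NormedSpace ℝ G] (S : E →L[ℝ] E' →L[ℝ] G) {f : X → E} {g : X → E'}
    (hf : LocallyLipschitz f) (hg : LocallyLipschitz g) :
    LocallyLipschitz fun x => S (f x) (g x) :=
  (S.isBoundedBilinearMap.contDiff (n := 1)).locallyLipschitz.comp (hf.prodMk hg)

theorem locallyLipschitz_closedLoop {X : Type*} [PseudoEMetricSpace X] {a : X → m → ℝ}
    {b : X → m → n → ℝ} {α : X → n → ℝ} (ha : LocallyLipschitz a) (hb : LocallyLipschitz b)
    (hα : LocallyLipschitz α) : LocallyLipschitz fun x => a x + Matrix.of (b x) *ᵥ α x := by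
  have hmul : LocallyLipschitz fun x => mulVecL (b x) (α x) :=
    locallyLipschitz_clm_apply₂ (E := m → n → ℝ) (E' := n → ℝ) (G := m → ℝ) mulVecL hb hα
  simpa only [mulVecL_apply] using ha.add hmul

theorem hasFDerivAt_closedLoop {a : (m → ℝ) → m → ℝ} {b : (m → ℝ) → m → n → ℝ}
    {α : (m → ℝ) → n → ℝ} {A : Matrix m m ℝ} {K : Matrix n m ℝ} {x : m → ℝ}
    (ha : HasFDerivAt a A.mulVecLin.toContinuousLinearMap x) (hb : DifferentiableAt ℝ b x)
    (hα : HasFDerivAt α K.mulVecLin.toContinuousLinearMap x) (hα₀ : α x = 0) :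
    HasFDerivAt (fun x => a x + Matrix.of (b x) *ᵥ α x)
      (A + Matrix.of (b x) * K).mulVecLin.toContinuousLinearMap x := by
  simp only [← mulVecL_apply]
  refine (ha.add (mulVecL.hasFDerivAt_of_bilinear hb.hasFDerivAt hα)).congr_fderiv ?_
  ext1 v
  simp [hα₀, mulVecL_apply]

end ClosedLoop

theorem stmt18_general {n : ℕ} {F : (Fin n → ℝ) → Fin n → ℝ} {M P : Matrix (Fin n) (Fin n) ℝ}
    (hF : LocallyLipschitz F) (hF₀ : F 0 = 0)
    (hM : HasFDerivAt F M.mulVecLin.toContinuousLinearMap 0) (hattr : IsGloballyAttractive F)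
    (hP : P.PosDef) (hN : (-(Mᵀ * P + P * M)).PosDef) :
    ∃ (V : (Fin n → ℝ) → ℝ) (ε₂ : ℝ), 0 < ε₂ ∧
      ContDiff ℝ 2 V ∧ (∀ χ, 0 ≤ V χ) ∧ IsProper V ∧ IsPosDefFn V ∧
      (∀ χ : Fin n → ℝ, ‖χ‖ ≤ ε₂ → V χ = χ ⬝ᵥ P *ᵥ χ) ∧
      hessianAt V 0 = (2 : ℝ) • P ∧
      ∀ χ : Fin n → ℝ, χ ≠ 0 → fderiv ℝ V χ (F χ) < 0 := by
  have hpos : ∀ x ≠ 0, 0 < matrixBilin P x x := fun x hx => by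
    simpa [matrixBilin_apply] using hP.dotProduct_mulVec_pos hx
  have hneg : ∀ x ≠ 0, matrixBilin P x (M *ᵥ x) + matrixBilin P (M *ᵥ x) x < 0 := fun x hx => by
    rw [matrixBilin_mulVec_add, ← neg_pos, ← dotProduct_neg, ← Matrix.neg_mulVec]
    simpa only [star_trivial] using hN.dotProduct_mulVec_pos hx
  obtain ⟨V, hV, hV_proper, hV_pos, hVP, hV_neg⟩ :=
    exists_globalLyapunov_eventuallyEq_apply_self hF hF₀ hM hattr hpos hneg
  simp only [matrixBilin_apply] at hVP
  obtain ⟨ε, hε, hεV⟩ := Metric.eventually_nhds_iff_ball.1 hVP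
  refine ⟨V, ε / 2, half_pos hε, hV, fun x => ?_, hV_proper, hV_pos, fun x hx => hεV x ?_, ?_,
    hV_neg⟩
  · rcases eq_or_ne x 0 with rfl | hx
    · exact hV_pos.1.ge
    · exact (hV_pos.2 x hx).le
  · exact mem_ball_zero_iff.2 (hx.trans_lt (half_lt_self hε))
  · rw [hessianAt_congr hVP, hessianAt_dotProduct_mulVec, two_smul,
      ← Matrix.conjTranspose_eq_transpose_of_trivial, hP.isHermitian.eq]

/-- If a locally Lipschitz feedback `α₀`, differentiable at `0` with
`α₀ 0 = 0` and `Dα₀(0) = K` (where `A + BK` is Hurwitz), globally asymptotically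
stabilizes `χ' = a χ + b χ · α₀ χ`, then for every positive definite `P` with
`(A+BK)ᵀP + P(A+BK)` negative definite there are a `C²` proper positive definite `V`
and `ε₂ > 0` with `V(χ) = χᵀPχ` for `‖χ‖ ≤ ε₂` (hence `H(V)(0) = 2P`) and
`∇V·(a + b α₀) < 0` away from the origin. -/
theorem stmt18 {n p : ℕ}
    (a : (Fin n → ℝ) → (Fin n → ℝ)) (b : (Fin n → ℝ) → Fin n → Fin p → ℝ)
    (A : Matrix (Fin n) (Fin n) ℝ) (B : Matrix (Fin n) (Fin p) ℝ)
    (K : Matrix (Fin p) (Fin n) ℝ)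
    (ha : ContDiff ℝ 1 a) (ha0 : a 0 = 0)
    (hA : ∀ v, fderiv ℝ a 0 v = A.mulVec v)
    (hb : ContDiff ℝ 1 b) (hB : B = Matrix.of (b 0))
    (hHurwitz : Hurwitz (A + B * K))
    (α₀ : (Fin n → ℝ) → (Fin p → ℝ))
    (hα_lip : LocallyLipschitz α₀) (hα_diff : DifferentiableAt ℝ α₀ 0)
    (hα0 : α₀ 0 = 0) (hαK : ∀ v, fderiv ℝ α₀ 0 v = K.mulVec v)
    (hGAS : IsGAS fun χ => a χ + (Matrix.of (b χ)).mulVec (α₀ χ)) :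
    ∀ P : Matrix (Fin n) (Fin n) ℝ, P.PosDef →
      (-((A + B * K)ᵀ * P + P * (A + B * K))).PosDef →
      ∃ (V : (Fin n → ℝ) → ℝ) (ε₂ : ℝ), 0 < ε₂ ∧
        ContDiff ℝ 2 V ∧ (∀ χ, 0 ≤ V χ) ∧ IsProper V ∧ IsPosDefFn V ∧
        (∀ χ : Fin n → ℝ, ‖χ‖ ≤ ε₂ → V χ = χ ⬝ᵥ P.mulVec χ) ∧
        hessianAt V 0 = (2:ℝ) • P ∧
        (∀ χ : Fin n → ℝ, χ ≠ 0 →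
          fderiv ℝ V χ (a χ + (Matrix.of (b χ)).mulVec (α₀ χ)) < 0) := by
  subst hB
  have hlip := locallyLipschitz_closedLoop ha.locallyLipschitz hb.locallyLipschitz hα_lip
  have hderiv := hasFDerivAt_closedLoop
    (hasFDerivAt_mulVecLin_of_fderiv (ha.differentiable one_ne_zero 0) hA)
    (hb.differentiable one_ne_zero 0) (hasFDerivAt_mulVecLin_of_fderiv hα_diff hαK) hα0
  exact fun P hP hN => stmt18_general hlip (by simp [ha0, hα0]) hderiv hGAS.2 hP hN
end
end
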